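/- arXiv:2603.12019 — 6 statements merged into one kernel-verified Lean document; each statement's English description precedes it below -/
import Mathlib

section
/- Existence and uniqueness of the Clebsch–Gordan harmonic decomposition: for every elasticity tensor C ∈ Ela there exists exactly one quintuple (α, β, hᵃ, hᵇ, H) with α, β ∈ ℝ, hᵃ, hᵇ ∈ H², H ∈ H⁴ such that C equals the Clebsch–Gordan combination of (α, β, hᵃ, hᵇ, H), i.e. C_ijkl = α J_ijkl + β K_ijkl + (hᵃ ⊠ 1)_ijkl + (1/3)(hᵇ_ij δ_kl + δ_ij hᵇ_kl) + H_ijkl for all indices i, j, k, l. -/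
open scoped BigOperators

/-- Fourth-order tensors on `ℝ³`. -/
abbrev Tens4 : Type := Fin 3 → Fin 3 → Fin 3 → Fin 3 → ℝ

/-- 3×3 real matrices. -/
abbrev Mat3 : Type := Matrix (Fin 3) (Fin 3) ℝ

/-- Kronecker delta on `Fin 3`. -/
noncomputable def kdelta (i j : Fin 3) : ℝ := if i = j then 1 else 0

/-- Minor and major index symmetries of an elasticity tensor. -/
def IsEla (C : Tens4) : Prop :=
  ∀ i j k l, C i j k l = C j i k l ∧ C i j k l = C i j l k ∧ C i j k l = C k l i j

/-- Harmonic second-order tensors: symmetric and trace free. -/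
def IsH2 (h : Mat3) : Prop := h.IsSymm ∧ h.trace = 0

/-- Harmonic fourth-order tensors: totally symmetric and trace free. -/
def IsH4 (H : Tens4) : Prop :=
  (∀ (σ : Equiv.Perm (Fin 4)) (f : Fin 4 → Fin 3),
      H (f (σ 0)) (f (σ 1)) (f (σ 2)) (f (σ 3)) = H (f 0) (f 1) (f 2) (f 3)) ∧
  (∀ k l, ∑ i, H i i k l = 0)

/-- Spherical projector `K`. -/
noncomputable def Kt (i j k l : Fin 3) : ℝ := (1/3) * kdelta i j * kdelta k l

/-- Identity tensor `I` on symmetric second order tensors. -/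
noncomputable def It (i j k l : Fin 3) : ℝ :=
  (1/2) * (kdelta i k * kdelta j l + kdelta i l * kdelta j k)

/-- Deviatoric projector `J = I - K`. -/
noncomputable def Jt (i j k l : Fin 3) : ℝ := It i j k l - Kt i j k l

/-- The product `h ⊠ 1` for a harmonic second order tensor `h`. -/
noncomputable def boxOne (h : Mat3) (i j k l : Fin 3) : ℝ :=
  (1/7) * (3 * (h i k * kdelta j l + h i l * kdelta j k + kdelta i k * h j l + kdelta i l * h j k)
    - 4 * (h i j * kdelta k l + kdelta i j * h k l))

/-- The Clebsch–Gordan combination of `(α, β, hᵃ, hᵇ, H)`. -/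
noncomputable def CG (α β : ℝ) (ha hb : Mat3) (H : Tens4) (i j k l : Fin 3) : ℝ :=
  α * Jt i j k l + β * Kt i j k l + boxOne ha i j k l
    + (1/3) * (hb i j * kdelta k l + kdelta i j * hb k l) + H i j k l

/-!
An elasticity tensor has two independent traces, the dilatation tensor `d_ij = C_ijkk` and the Voigt
tensor `v_ij = C_ikjk`. For a Clebsch–Gordan combination they are `d = β 1 + hᵇ` and
`v = (5α/3 + β/3) 1 + hᵃ + (2/3) hᵇ`, up to the traces of `H`. Splitting `d` and `v - (2/3) d` into
spherical and deviatoric parts therefore determines `α`, `β`, `hᵃ`, `hᵇ`, and these choices leave a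
remainder `H` both of whose traces vanish. It remains to see that such an `H` is totally symmetric:
`H_ijkl - H_ikjl` is skew in `(i, l)` and in `(j, k)`, with vanishing Ricci contraction, and in
dimension three a curvature-like tensor is determined by its Ricci contraction.
-/

section Deviator

variable {n K : Type*} [Fintype n] [DecidableEq n] [Field K]

/-- The deviatoric (trace-free) part of a square matrix, obtained by subtracting its spherical part,
the multiple of `1` with the same trace. Where `Fintype.card n = 0` in `K` it is `A` itself. -/
def deviator (A : Matrix n n K) : Matrix n n K := A - (A.trace / Fintype.card n) • 1

lemma isSymm_deviator {A : Matrix n n K} (hA : A.IsSymm) : (deviator A).IsSymm :=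
  hA.sub (Matrix.isSymm_one.smul _)

variable [CharZero K] [Nonempty n]

lemma trace_deviator (A : Matrix n n K) : (deviator A).trace = 0 := by
  simp [deviator, Matrix.trace_sub, Matrix.trace_smul]

lemma eq_smul_one_add_iff {A h : Matrix n n K} {c : K} (hh : h.trace = 0) :
    A = c • 1 + h ↔ c = A.trace / Fintype.card n ∧ h = deviator A := by
  constructor
  · rintro rfl
    have hc : (c • (1 : Matrix n n K) + h).trace / Fintype.card n = c := by
      simp [Matrix.trace_add, Matrix.trace_smul, hh]
    exact ⟨hc.symm, by rw [deviator, hc, add_sub_cancel_left]⟩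
  · rintro ⟨rfl, rfl⟩
    exact (add_sub_cancel _ _).symm

end Deviator

lemma isH2_deviator {A : Mat3} (hA : A.IsSymm) : IsH2 (deviator A) :=
  ⟨isSymm_deviator hA, trace_deviator A⟩

lemma apply_comp_perm_of_adjacent_swap {n : ℕ} {α β : Type*} {F : (Fin (n + 1) → α) → β}
    (hF : ∀ (i : Fin n) (f : Fin (n + 1) → α), F (f ∘ Equiv.swap i.castSucc i.succ) = F f)
    (σ : Equiv.Perm (Fin (n + 1))) (f : Fin (n + 1) → α) : F (f ∘ σ) = F f := by
  have hσ : σ ∈ Submonoid.closure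
      (Set.range fun i : Fin n ↦ Equiv.swap i.castSucc i.succ) := by
    rw [Equiv.Perm.mclosure_swap_castSucc_succ]
    exact Submonoid.mem_top σ
  induction hσ using Submonoid.closure_induction generalizing f with
  | mem τ hτ =>
    obtain ⟨i, rfl⟩ := hτ
    exact hF i f
  | one => rfl
  | mul τ ρ _ _ ihτ ihρ => exact (ihρ (f ∘ τ)).trans (ihτ f)

lemma sum_fin_three_eq_of_ne {M : Type*} [AddCommMonoid M] (f : Fin 3 → M) {i j m : Fin 3}
    (hij : i ≠ j) (him : i ≠ m) (hjm : j ≠ m) : ∑ k, f k = f i + f j + f m := by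
  have huniv : (Finset.univ : Finset (Fin 3)) = {i, j, m} := by decide +revert
  rw [huniv, Finset.sum_insert (by simp [hij, him]), Finset.sum_pair hjm, add_assoc]

section Curvature

variable {M : Type*} [AddCommGroup M] [IsAddTorsionFree M] {R : Fin 3 → Fin 3 → Fin 3 → Fin 3 → M}

-- The diagonal Ricci entries are the pairwise sums of the three sectional curvatures.
lemma sectional_eq_zero_of_ricci_eq_zero (skew_left : ∀ i j k l, R j i k l = -R i j k l)
    (skew_right : ∀ i j k l, R i j l k = -R i j k l) (ricci : ∀ i, ∑ k, R i k i k = 0)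
    (i j : Fin 3) : R i j i j = 0 := by
  have diag_left (i k l) : R i i k l = 0 := self_eq_neg.mp (skew_left i i k l)
  have sectional_symm (i j) : R j i j i = R i j i j := by
    rw [skew_left, skew_right, neg_neg]
  have sectional_eq_neg {i j m : Fin 3} (hij : i ≠ j) (him : i ≠ m) (hjm : j ≠ m) :
      R i j i j = -R i m i m := by
    have hsum := ricci i
    rw [sum_fin_three_eq_of_ne _ hij him hjm, diag_left, zero_add] at hsum
    exact eq_neg_of_add_eq_zero_left hsum
  by_cases hij : i = j
  · rw [hij, diag_left]
  obtain ⟨m, him, hjm⟩ : ∃ m, i ≠ m ∧ j ≠ m := by decide +revert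
  refine self_eq_neg.mp ?_
  calc R i j i j = -R i m i m := sectional_eq_neg hij him hjm
    _ = -R m i m i := by rw [sectional_symm]
    _ = R m j m j := by rw [sectional_eq_neg him.symm hjm.symm hij, neg_neg]
    _ = R j m j m := sectional_symm j m
    _ = -R j i j i := sectional_eq_neg hjm (Ne.symm hij) him.symm
    _ = -R i j i j := by rw [sectional_symm]

lemma eq_zero_of_skew_of_ricci_eq_zero (skew_left : ∀ i j k l, R j i k l = -R i j k l)
    (skew_right : ∀ i j k l, R i j l k = -R i j k l) (ricci : ∀ i j, ∑ k, R i k j k = 0)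
    (i j k l : Fin 3) : R i j k l = 0 := by
  have diag_left (i k l) : R i i k l = 0 := self_eq_neg.mp (skew_left i i k l)
  have diag_right (i j k) : R i j k k = 0 := self_eq_neg.mp (skew_right i j k k)
  -- Off the diagonal, the Ricci contraction has a single nonzero term.
  have shared_second (i j m : Fin 3) : R i m j m = 0 := by
    by_cases him : i = m
    · rw [him, diag_left]
    by_cases hjm : j = m
    · rw [hjm, diag_right]
    by_cases hij : i = j
    · rw [← hij, sectional_eq_zero_of_ricci_eq_zero skew_left skew_right fun i ↦ ricci i i]
    · simpa only [sum_fin_three_eq_of_ne _ hij him hjm, diag_left, diag_right, zero_add]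
        using ricci i j
  have pigeonhole : i = j ∨ k = l ∨ j = l ∨ i = l ∨ j = k ∨ i = k := by decide +revert
  rcases pigeonhole with rfl | rfl | rfl | rfl | rfl | rfl
  · exact diag_left i k l
  · exact diag_right i j k
  · exact shared_second i k j
  · rw [skew_left, shared_second, neg_zero]
  · rw [skew_right, shared_second, neg_zero]
  · rw [skew_left, skew_right, shared_second, neg_zero, neg_zero]

end Curvature

section Traces

/-- The dilatation tensor `d_ij = C_ijkk`, one of the two traces of an elasticity tensor. -/
def dilatation : Tens4 →ₗ[ℝ] Mat3 where
  toFun C := Matrix.of fun i j ↦ ∑ k, C i j k k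
  map_add' C D := by ext; simp [Finset.sum_add_distrib]
  map_smul' a C := by ext; simp [Finset.mul_sum]

/-- The Voigt tensor `v_ij = C_ikjk`, the other trace of an elasticity tensor. -/
def voigt : Tens4 →ₗ[ℝ] Mat3 where
  toFun C := Matrix.of fun i j ↦ ∑ k, C i k j k
  map_add' C D := by ext; simp [Finset.sum_add_distrib]
  map_smul' a C := by ext; simp [Finset.mul_sum]

lemma dilatation_apply (C : Tens4) (i j : Fin 3) : dilatation C i j = ∑ k, C i j k k := rfl

lemma voigt_apply (C : Tens4) (i j : Fin 3) : voigt C i j = ∑ k, C i k j k := rfl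

lemma IsEla.isSymm_dilatation {C : Tens4} (hC : IsEla C) : (dilatation C).IsSymm := by
  ext i j
  rw [Matrix.transpose_apply, dilatation_apply, dilatation_apply]
  exact Finset.sum_congr rfl fun k _ ↦ (hC j i k k).1

lemma IsEla.isSymm_voigt {C : Tens4} (hC : IsEla C) : (voigt C).IsSymm := by
  ext i j
  rw [Matrix.transpose_apply, voigt_apply, voigt_apply]
  exact Finset.sum_congr rfl fun k _ ↦ (hC j k i k).2.2

end Traces

section HarmonicFour

lemma IsEla.swap_middle_of_traces_eq_zero {C : Tens4} (hC : IsEla C) (hd : dilatation C = 0)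
    (hv : voigt C = 0) (i j k l : Fin 3) : C i j k l = C i k j l := by
  have minor_left (i j k l) : C i j k l = C j i k l := (hC i j k l).1
  have minor_right (i j k l) : C i j k l = C i j l k := (hC i j k l).2.1
  have major (i j k l) : C i j k l = C k l i j := (hC i j k l).2.2
  let R : Tens4 := fun i l j k ↦ C i j k l - C i k j l
  have reverse (i j k l) : C l k j i = C i j k l := by
    rw [major, minor_left, minor_right]
  have skew_left (i l j k) : R l i j k = -R i l j k := by
    simp only [R, reverse, neg_sub]
  have skew_right (i l j k) : R i l k j = -R i l j k := (neg_sub _ _).symm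
  have ricci (i j) : ∑ k, R i k j k = 0 := by
    rw [Finset.sum_sub_distrib, ← dilatation_apply, ← voigt_apply, hd, hv, sub_self]
  exact sub_eq_zero.mp (eq_zero_of_skew_of_ricci_eq_zero skew_left skew_right ricci i l j k)

lemma isH4_of_adjacent_swap {H : Tens4} (h01 : ∀ i j k l, H i j k l = H j i k l)
    (h12 : ∀ i j k l, H i j k l = H i k j l) (h23 : ∀ i j k l, H i j k l = H i j l k)
    (htrace : ∀ k l, ∑ i, H i i k l = 0) : IsH4 H := by
  refine ⟨apply_comp_perm_of_adjacent_swap (F := fun f ↦ H (f 0) (f 1) (f 2) (f 3)) ?_, htrace⟩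
  intro i f
  fin_cases i
  · exact h01 _ _ _ _
  · exact h12 _ _ _ _
  · exact h23 _ _ _ _

variable {H : Tens4}

lemma IsH4.swap_middle (hH : IsH4 H) (i j k l : Fin 3) : H i j k l = H i k j l :=
  hH.1 (Equiv.swap 1 2) ![i, k, j, l]

lemma IsH4.isEla (hH : IsH4 H) : IsEla H := fun i j k l ↦
  ⟨hH.1 (Equiv.swap 0 1) ![j, i, k, l], hH.1 (Equiv.swap 2 3) ![i, j, l, k],
    hH.1 (Equiv.addRight 2) ![k, l, i, j]⟩

lemma IsH4.dilatation_eq_zero (hH : IsH4 H) : dilatation H = 0 := by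
  ext i j
  calc ∑ k, H i j k k = ∑ k, H k k i j :=
        Finset.sum_congr rfl fun k _ ↦ (hH.isEla i j k k).2.2
    _ = 0 := hH.2 i j

lemma IsH4.voigt_eq_zero (hH : IsH4 H) : voigt H = 0 := by
  rw [← hH.dilatation_eq_zero]
  ext i j
  rw [voigt_apply, dilatation_apply]
  exact Finset.sum_congr rfl fun k _ ↦ hH.swap_middle i k j k

lemma isH4_iff_isEla_and_traces_eq_zero :
    IsH4 H ↔ IsEla H ∧ dilatation H = 0 ∧ voigt H = 0 := by
  refine ⟨fun hH ↦ ⟨hH.isEla, hH.dilatation_eq_zero, hH.voigt_eq_zero⟩, ?_⟩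
  rintro ⟨hE, hd, hv⟩
  refine isH4_of_adjacent_swap (fun i j k l ↦ (hE i j k l).1)
    (hE.swap_middle_of_traces_eq_zero hd hv) (fun i j k l ↦ (hE i j k l).2.1) fun k l ↦ ?_
  calc ∑ i, H i i k l = dilatation H k l :=
        Finset.sum_congr rfl fun i _ ↦ (hE i i k l).2.2
    _ = 0 := by rw [hd, Matrix.zero_apply]

end HarmonicFour

section ClebschGordan

/-- The space `Ela` of elasticity tensors, as a subspace of all fourth-order tensors. -/
def elaSubmodule : Submodule ℝ Tens4 where
  carrier := {C | IsEla C}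
  add_mem' {C D} hC hD i j k l := by
    obtain ⟨⟨hC₁, hC₂, hC₃⟩, hD₁, hD₂, hD₃⟩ := And.intro (hC i j k l) (hD i j k l)
    exact ⟨congrArg₂ (· + ·) hC₁ hD₁, congrArg₂ (· + ·) hC₂ hD₂, congrArg₂ (· + ·) hC₃ hD₃⟩
  zero_mem' _ _ _ _ := ⟨rfl, rfl, rfl⟩
  smul_mem' a C hC i j k l := by
    obtain ⟨hC₁, hC₂, hC₃⟩ := hC i j k l
    exact ⟨congrArg (a * ·) hC₁, congrArg (a * ·) hC₂, congrArg (a * ·) hC₃⟩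

/-- The symmetrised tensor product `h ⊗ 1 + 1 ⊗ h`, the carrier of `hᵇ` in the Clebsch–Gordan
combination. -/
noncomputable def symmTensorOne (h : Mat3) : Tens4 :=
  fun i j k l ↦ h i j * kdelta k l + kdelta i j * h k l

lemma CG_eq_add (α β : ℝ) (ha hb : Mat3) (H : Tens4) :
    CG α β ha hb H =
      α • Jt + β • Kt + boxOne ha + (1 / 3 : ℝ) • symmTensorOne hb + H := rfl

lemma Jt_eq_sub : Jt = It - Kt := rfl

lemma kdelta_eq_one_apply (i j : Fin 3) : kdelta i j = (1 : Mat3) i j := rfl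

lemma kdelta_comm (i j : Fin 3) : kdelta i j = kdelta j i := Matrix.isSymm_one.apply j i

lemma sum_kdelta_self : ∑ k, kdelta k k = 3 := Matrix.trace_one.trans (by simp)

lemma sum_mul_kdelta_left (f : Fin 3 → ℝ) (i : Fin 3) : ∑ k, f k * kdelta k i = f i := by
  simp [kdelta]

lemma sum_mul_kdelta_right (f : Fin 3 → ℝ) (i : Fin 3) : ∑ k, f k * kdelta i k = f i := by
  simp [kdelta]

lemma sum_kdelta_right_mul (f : Fin 3 → ℝ) (i : Fin 3) : ∑ k, kdelta i k * f k = f i := by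
  simp [kdelta]

lemma isEla_Kt : IsEla Kt := fun i j k l ↦ by
  simp only [Kt, kdelta_comm j i, kdelta_comm l k]
  exact ⟨trivial, trivial, by ring⟩

lemma isEla_It : IsEla It := fun i j k l ↦ by
  simp only [It, kdelta_comm k, kdelta_comm l]
  exact ⟨by ring, by ring, by ring⟩

lemma isEla_Jt : IsEla Jt := elaSubmodule.sub_mem isEla_It isEla_Kt

variable {h : Mat3}

lemma isEla_symmTensorOne (hh : h.IsSymm) : IsEla (symmTensorOne h) := fun i j k l ↦ by
  simp only [symmTensorOne, kdelta_comm j i, kdelta_comm l k, hh.apply i j, hh.apply k l]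
  exact ⟨trivial, trivial, by ring⟩

lemma isEla_boxOne (hh : h.IsSymm) : IsEla (boxOne h) := fun i j k l ↦ by
  simp only [boxOne, kdelta_comm j i, kdelta_comm l k, kdelta_comm k i, kdelta_comm k j,
    kdelta_comm l i, kdelta_comm l j, hh.apply i j, hh.apply k l, hh.apply i k, hh.apply i l,
    hh.apply j k, hh.apply j l]
  exact ⟨by ring, by ring, by ring⟩

lemma dilatation_Kt : dilatation Kt = 1 := by
  ext i j
  simp only [dilatation_apply, Kt, ← Finset.mul_sum, sum_kdelta_self, ← kdelta_eq_one_apply]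
  ring

lemma dilatation_It : dilatation It = 1 := by
  ext i j
  simp only [dilatation_apply, It, ← Finset.mul_sum, Finset.sum_add_distrib, sum_mul_kdelta_right,
    ← kdelta_eq_one_apply]
  ring

lemma voigt_Kt : voigt Kt = (1 / 3 : ℝ) • 1 := by
  ext i j
  simp only [voigt_apply, Kt, sum_mul_kdelta_right, Matrix.smul_apply, smul_eq_mul,
    ← kdelta_eq_one_apply]

lemma voigt_It : voigt It = (2 : ℝ) • 1 := by
  ext i j
  simp only [voigt_apply, It, ← Finset.mul_sum, Finset.sum_add_distrib, sum_kdelta_self,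
    sum_mul_kdelta_left, Matrix.smul_apply, smul_eq_mul, ← kdelta_eq_one_apply]
  ring

lemma dilatation_Jt : dilatation Jt = 0 := by
  rw [Jt_eq_sub, map_sub, dilatation_It, dilatation_Kt, sub_self]

lemma voigt_Jt : voigt Jt = (5 / 3 : ℝ) • 1 := by
  rw [Jt_eq_sub, map_sub, voigt_It, voigt_Kt, ← sub_smul]
  norm_num

lemma dilatation_symmTensorOne (hh : h.trace = 0) :
    dilatation (symmTensorOne h) = (3 : ℝ) • h := by
  have htr : ∑ k, h k k = 0 := hh
  ext i j
  simp only [dilatation_apply, symmTensorOne, Finset.sum_add_distrib, ← Finset.mul_sum,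
    sum_kdelta_self, htr, Matrix.smul_apply, smul_eq_mul]
  ring

lemma voigt_symmTensorOne (hh : h.IsSymm) : voigt (symmTensorOne h) = (2 : ℝ) • h := by
  ext i j
  simp only [voigt_apply, symmTensorOne, Finset.sum_add_distrib, sum_mul_kdelta_right,
    sum_kdelta_right_mul, hh.apply i j, Matrix.smul_apply, smul_eq_mul]
  ring

lemma dilatation_boxOne (hh : IsH2 h) : dilatation (boxOne h) = 0 := by
  have htr : ∑ k, h k k = 0 := hh.2
  ext i j
  simp only [dilatation_apply, boxOne, Finset.sum_add_distrib, Finset.sum_sub_distrib,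
    ← Finset.mul_sum, sum_mul_kdelta_right, sum_kdelta_right_mul, sum_kdelta_self, htr,
    hh.1.apply i j, Matrix.zero_apply]
  ring

lemma voigt_boxOne (hh : IsH2 h) : voigt (boxOne h) = h := by
  have htr : ∑ k, h k k = 0 := hh.2
  ext i j
  simp only [voigt_apply, boxOne, Finset.sum_add_distrib, Finset.sum_sub_distrib,
    ← Finset.mul_sum, sum_mul_kdelta_right, sum_mul_kdelta_left, sum_kdelta_right_mul,
    sum_kdelta_self, htr, hh.1.apply i j]
  ring

variable {α β : ℝ} {ha hb : Mat3} {H : Tens4}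

lemma isEla_CG_iff (hha : ha.IsSymm) (hhb : hb.IsSymm) : IsEla (CG α β ha hb H) ↔ IsEla H := by
  rw [CG_eq_add]
  refine elaSubmodule.add_mem_iff_right ?_
  exact add_mem (add_mem (add_mem (elaSubmodule.smul_mem α isEla_Jt)
    (elaSubmodule.smul_mem β isEla_Kt)) (isEla_boxOne hha))
    (elaSubmodule.smul_mem _ (isEla_symmTensorOne hhb))

lemma dilatation_CG (hha : IsH2 ha) (hhb : IsH2 hb) :
    dilatation (CG α β ha hb H) = β • 1 + hb + dilatation H := by
  simp only [CG_eq_add, map_add, map_smul, dilatation_Jt, dilatation_Kt, dilatation_boxOne hha,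
    dilatation_symmTensorOne hhb.2]
  module

lemma voigt_CG (hha : IsH2 ha) (hhb : IsH2 hb) :
    voigt (CG α β ha hb H) =
      ((5 * α + β) / 3) • 1 + ha + (2 / 3 : ℝ) • hb + voigt H := by
  simp only [CG_eq_add, map_add, map_smul, voigt_Jt, voigt_Kt, voigt_boxOne hha,
    voigt_symmTensorOne hhb.1]
  module

/-- The coefficient `β` of `K` in the decomposition of `C`, from `tr d = 3 β`. -/
noncomputable def sphericalCoeff (C : Tens4) : ℝ := (dilatation C).trace / 3

/-- The coefficient `α` of `J` in the decomposition of `C`, from `tr v = 5 α + β`. -/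
noncomputable def deviatoricCoeff (C : Tens4) : ℝ := ((voigt C).trace - sphericalCoeff C) / 5

/-- The harmonic component `hᵃ` of `C`; in `v - (2/3) d` the contribution of `hᵇ` cancels. -/
noncomputable def harmonicA (C : Tens4) : Mat3 := deviator (voigt C - (2 / 3 : ℝ) • dilatation C)

/-- The harmonic component `hᵇ` of `C`. -/
noncomputable def harmonicB (C : Tens4) : Mat3 := deviator (dilatation C)

/-- The fourth-order component `H` of `C`, what is left of `C` once the lower-order components are
subtracted. -/
noncomputable def harmonicRemainder (C : Tens4) : Tens4 :=
  C - CG (deviatoricCoeff C) (sphericalCoeff C) (harmonicA C) (harmonicB C) 0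

variable {C : Tens4}

lemma IsEla.isH2_harmonicA (hC : IsEla C) : IsH2 (harmonicA C) :=
  isH2_deviator (hC.isSymm_voigt.sub (hC.isSymm_dilatation.smul _))

lemma IsEla.isH2_harmonicB (hC : IsEla C) : IsH2 (harmonicB C) :=
  isH2_deviator hC.isSymm_dilatation

lemma eq_CG_iff_remainder_eq : C = CG α β ha hb H ↔ H = C - CG α β ha hb 0 := by
  rw [eq_sub_iff_add_eq', CG_eq_add, CG_eq_add, add_zero, eq_comm]

lemma IsEla.isH4_iff_coeffs_eq (hC : IsEla C) (hha : IsH2 ha) (hhb : IsH2 hb)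
    (hCG : C = CG α β ha hb H) :
    IsH4 H ↔
      α = deviatoricCoeff C ∧ β = sphericalCoeff C ∧ ha = harmonicA C ∧ hb = harmonicB C := by
  have hH : IsEla H := (isEla_CG_iff hha.1 hhb.1).mp (hCG ▸ hC)
  have hd : dilatation C = β • 1 + hb + dilatation H := hCG ▸ dilatation_CG hha hhb
  have hv : voigt C - (2 / 3 : ℝ) • dilatation C =
      ((5 * α - β) / 3) • 1 + ha + (voigt H - (2 / 3 : ℝ) • dilatation H) := by
    rw [hd, hCG, voigt_CG hha hhb]
    module
  have coeffs : (5 * α - β) / 3 = (voigt C - (2 / 3 : ℝ) • dilatation C).trace / 3 ∧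
      β = sphericalCoeff C ↔ α = deviatoricCoeff C ∧ β = sphericalCoeff C := by
    refine and_congr_left ?_
    rintro rfl
    rw [deviatoricCoeff, sphericalCoeff, Matrix.trace_sub, Matrix.trace_smul, smul_eq_mul]
    constructor <;> intro h <;> linarith
  calc IsH4 H ↔ dilatation H = 0 ∧ voigt H - (2 / 3 : ℝ) • dilatation H = 0 := by
        rw [isH4_iff_isEla_and_traces_eq_zero]
        simp +contextual [hH]
    _ ↔ dilatation C = β • 1 + hb ∧
        voigt C - (2 / 3 : ℝ) • dilatation C = ((5 * α - β) / 3) • 1 + ha := by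
        rw [hv, hd, add_eq_left, add_eq_left]
    _ ↔ _ := by
        rw [eq_smul_one_add_iff hhb.2, eq_smul_one_add_iff hha.2, Fintype.card_fin, Nat.cast_ofNat,
          ← and_assoc (a := α = _), ← coeffs, ← sphericalCoeff, ← harmonicA, ← harmonicB]
        tauto

end ClebschGordan

/-- Existence and uniqueness of the Clebsch–Gordan harmonic decomposition. -/
theorem cg_decomposition_existsUnique (C : Tens4) (hC : IsEla C) :
    ∃! q : ℝ × ℝ × Mat3 × Mat3 × Tens4,
      IsH2 q.2.2.1 ∧ IsH2 q.2.2.2.1 ∧ IsH4 q.2.2.2.2 ∧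
      ∀ i j k l, C i j k l = CG q.1 q.2.1 q.2.2.1 q.2.2.2.1 q.2.2.2.2 i j k l := by
  have eq_remainder : C = CG (deviatoricCoeff C) (sphericalCoeff C) (harmonicA C) (harmonicB C)
      (harmonicRemainder C) := eq_CG_iff_remainder_eq.mpr rfl
  refine ⟨(deviatoricCoeff C, sphericalCoeff C, harmonicA C, harmonicB C, harmonicRemainder C),
    ⟨hC.isH2_harmonicA, hC.isH2_harmonicB, ?_, ?_⟩, ?_⟩
  · exact (hC.isH4_iff_coeffs_eq hC.isH2_harmonicA hC.isH2_harmonicB eq_remainder).mpr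
      ⟨rfl, rfl, rfl, rfl⟩
  · intro i j k l
    exact congrFun (congrFun₃ eq_remainder i j k) l
  · rintro ⟨α, β, ha, hb, H⟩ ⟨hha, hhb, hH, hCG⟩
    replace hCG : C = CG α β ha hb H := by
      funext i j k l
      exact hCG i j k l
    obtain ⟨rfl, rfl, rfl, rfl⟩ := (hC.isH4_iff_coeffs_eq hha hhb hCG).mp hH
    rw [eq_CG_iff_remainder_eq.mp hCG, harmonicRemainder]
end

section
/- Existence and uniqueness of the Schur–Weyl harmonic decomposition: for every elasticity tensor C ∈ Ela there exists exactly one quintuple (α, β, hᵃ, hᵇ, H) with α, β ∈ ℝ, hᵃ, hᵇ ∈ H², H ∈ H⁴ such that C = α(1 ⊗₍₂,₂₎ 1) + β(1 ⊗₍₄₎ 1) + hᵃ ⊗₍₂,₂₎ 1 + hᵇ ⊗₍₄₎ 1 + H (componentwise equality of fourth-order tensors). -/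
open scoped BigOperators

/-- Totally symmetrised tensor product `t₁ ⊗₍₄₎ t₂`. -/
noncomputable def prod4 (t1 t2 : Mat3) (i j k l : Fin 3) : ℝ :=
  (1/6) * (t1 i j * t2 k l + t2 i j * t1 k l + t1 i k * t2 j l + t1 i l * t2 j k
    + t2 i k * t1 j l + t2 i l * t1 j k)

/-- Tensor product `t₁ ⊗₍₂,₂₎ t₂`. -/
noncomputable def prod22 (t1 t2 : Mat3) (i j k l : Fin 3) : ℝ :=
  (1/3) * (t1 i j * t2 k l + t2 i j * t1 k l
    - (1/2) * (t1 i k * t2 j l + t1 i l * t2 j k + t2 i k * t1 j l + t2 i l * t1 j k))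

/-- The Schur–Weyl combination of `(α, β, hᵃ, hᵇ, H)`. -/
noncomputable def SW (α β : ℝ) (ha hb : Mat3) (H : Tens4) (i j k l : Fin 3) : ℝ :=
  α * prod22 1 1 i j k l + β * prod4 1 1 i j k l + prod22 ha 1 i j k l
    + prod4 hb 1 i j k l + H i j k l

/-!
An elasticity tensor splits into its totally symmetric part `S` and a remainder `R` with vanishing
symmetrisation. The contraction `r_kl = ∑ᵢ T_iikl` sends `a ⊗₍₂,₂₎ 1` to `(tr a 1 + a) / 3` and
`b ⊗₍₄₎ 1` to `(tr b 1 + 7 b) / 6`, both invertible on symmetric matrices. Hence exactly one `b`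
makes `S - b ⊗₍₄₎ 1` harmonic, and exactly one `a` makes `R - a ⊗₍₂,₂₎ 1` trace free. In dimension
three, a trace-free tensor with the symmetries of `R` vanishes, just as the Weyl tensor does.
Finally, `a` and `b` split uniquely into a multiple of `1` and a deviatoric part.
-/

section TotalSymmetry

variable {ι R : Type*}

/-- Invariance of a fourth-order tensor under every permutation of its indices, phrased as in
`IsH4` so that `IsH4 H` begins with `IsTotallySymm H`. -/
def IsTotallySymm (T : ι → ι → ι → ι → R) : Prop :=
  ∀ (σ : Equiv.Perm (Fin 4)) (f : Fin 4 → ι),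
    T (f (σ 0)) (f (σ 1)) (f (σ 2)) (f (σ 3)) = T (f 0) (f 1) (f 2) (f 3)

theorem isTotallySymm_iff_adjacent_swaps {T : ι → ι → ι → ι → R} :
    IsTotallySymm T ↔ ∀ i j k l,
      T j i k l = T i j k l ∧ T i k j l = T i j k l ∧ T i j l k = T i j k l := by
  constructor
  · intro hT i j k l
    exact ⟨hT (Equiv.swap 0 1) ![i, j, k, l], hT (Equiv.swap 1 2) ![i, j, k, l],
      hT (Equiv.swap 2 3) ![i, j, k, l]⟩
  · intro hT σ
    have hσ : σ ∈ Submonoid.closure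
        (Set.range fun i : Fin 3 ↦ Equiv.swap i.castSucc i.succ) := by
      rw [Equiv.Perm.mclosure_swap_castSucc_succ]
      trivial
    induction hσ using Submonoid.closure_induction with
    | mem τ hτ =>
      obtain ⟨i, rfl⟩ := hτ
      intro f
      fin_cases i
      · exact (hT _ _ _ _).1
      · exact (hT _ _ _ _).2.1
      · exact (hT _ _ _ _).2.2
    | one => exact fun _ ↦ rfl
    | mul σ τ _ _ hσ hτ => exact fun f ↦ (hτ (f ∘ σ)).trans (hσ f)

theorem IsTotallySymm.sub [Sub R] {S T : ι → ι → ι → ι → R} (hS : IsTotallySymm S)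
    (hT : IsTotallySymm T) : IsTotallySymm (S - T) :=
  fun σ f ↦ congrArg₂ (· - ·) (hS σ f) (hT σ f)

end TotalSymmetry

theorem IsTotallySymm.isEla {T : Tens4} (hT : IsTotallySymm T) : IsEla T := by
  intro i j k l
  have swaps := isTotallySymm_iff_adjacent_swaps.mp hT
  have major : T k l i j = T i j k l := by
    rw [(swaps k i l j).2.1, (swaps k i j l).2.2, (swaps i k j l).1, (swaps i j k l).2.1]
  exact ⟨(swaps i j k l).1.symm, (swaps i j k l).2.2.symm, major.symm⟩

theorem IsEla.sub {C D : Tens4} (hC : IsEla C) (hD : IsEla D) : IsEla (C - D) := fun i j k l ↦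
  ⟨congrArg₂ (· - ·) (hC i j k l).1 (hD i j k l).1,
    congrArg₂ (· - ·) (hC i j k l).2.1 (hD i j k l).2.1,
    congrArg₂ (· - ·) (hC i j k l).2.2 (hD i j k l).2.2⟩

/-- The totally symmetric part of an elasticity tensor. The minor and major symmetries reduce the
average over all permutations of the indices to the three pairings of `{i, j, k, l}`, so on other
tensors this map is not the symmetriser. -/
noncomputable def symPart : Tens4 →ₗ[ℝ] Tens4 where
  toFun T i j k l := (T i j k l + T i k j l + T i l j k) / 3
  map_add' S T := by
    ext i j k l
    simp only [Pi.add_apply]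
    ring
  map_smul' c T := by
    ext i j k l
    simp only [Pi.smul_apply, smul_eq_mul, RingHom.id_apply]
    ring

theorem symPart_apply (T : Tens4) (i j k l : Fin 3) :
    symPart T i j k l = (T i j k l + T i k j l + T i l j k) / 3 :=
  rfl

/-- The dilatation contraction of a fourth-order tensor: the trace over its first two indices. -/
def contr : Tens4 →ₗ[ℝ] Mat3 where
  toFun T := Matrix.of fun k l ↦ ∑ i, T i i k l
  map_add' S T := by
    ext k l
    simp [Finset.sum_add_distrib]
  map_smul' c T := by
    ext k l
    simp [Finset.mul_sum]

theorem contr_apply (T : Tens4) (k l : Fin 3) : contr T k l = ∑ i, T i i k l :=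
  rfl

theorem isH4_iff_isTotallySymm_and_contr_eq_zero {H : Tens4} :
    IsH4 H ↔ IsTotallySymm H ∧ contr H = 0 :=
  and_congr_right' Matrix.ext_iff

theorem IsEla.isTotallySymm_symPart {C : Tens4} (hC : IsEla C) : IsTotallySymm (symPart C) := by
  refine isTotallySymm_iff_adjacent_swaps.mpr fun i j k l ↦ ?_
  simp only [symPart_apply]
  refine ⟨?_, ?_, ?_⟩
  · rw [(hC j i k l).1, (hC j k i l).2.2, (hC j l i k).2.2]
    ring
  · rw [(hC i l k j).2.1]
    ring
  · rw [(hC i j l k).2.1]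
    ring

theorem IsTotallySymm.symPart_eq {T : Tens4} (hT : IsTotallySymm T) : symPart T = T := by
  ext i j k l
  have swaps := isTotallySymm_iff_adjacent_swaps.mp hT
  rw [symPart_apply, (swaps i j l k).2.1, (swaps i j k l).2.1, (swaps i j k l).2.2]
  ring

theorem IsEla.isSymm_contr {C : Tens4} (hC : IsEla C) : (contr C).IsSymm := by
  refine Matrix.IsSymm.ext fun k l ↦ ?_
  simp only [contr_apply, fun i ↦ (hC i i l k).2.1]

section OneContraction

variable {n R : Type*} [Fintype n] [DecidableEq n] [NonAssocSemiring R]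

theorem sum_apply_mul_one_apply (s : Matrix n n R) (k l : n) :
    ∑ i, s i k * (1 : Matrix n n R) i l = s l k := by
  simp [Matrix.one_apply]

theorem sum_one_apply_mul_apply (s : Matrix n n R) (k l : n) :
    ∑ i, (1 : Matrix n n R) i k * s i l = s k l := by
  simp [Matrix.one_apply]

end OneContraction

section Products

variable {s t : Mat3}

theorem isTotallySymm_prod4 (hs : s.IsSymm) (ht : t.IsSymm) : IsTotallySymm (prod4 s t) := by
  refine isTotallySymm_iff_adjacent_swaps.mpr fun i j k l ↦ ?_
  simp only [prod4]
  refine ⟨?_, ?_, ?_⟩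
  · rw [hs.apply i j, ht.apply i j]
    ring
  · rw [hs.apply j k, ht.apply j k]
    ring
  · rw [hs.apply k l, ht.apply k l]
    ring

theorem isEla_prod22 (hs : s.IsSymm) (ht : t.IsSymm) : IsEla (prod22 s t) := by
  intro i j k l
  simp only [prod22]
  refine ⟨?_, ?_, ?_⟩
  · rw [hs.apply i j, ht.apply i j]
    ring
  · rw [hs.apply k l, ht.apply k l]
    ring
  · rw [hs.apply i k, ht.apply i k, hs.apply i l, ht.apply i l, hs.apply j k, ht.apply j k,
      hs.apply j l, ht.apply j l]
    ring

theorem symPart_prod22 (hs : s.IsSymm) (ht : t.IsSymm) : symPart (prod22 s t) = 0 := by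
  ext i j k l
  simp only [symPart_apply, prod22, Pi.zero_apply]
  rw [hs.apply j k, ht.apply j k, hs.apply j l, ht.apply j l, hs.apply k l, ht.apply k l]
  ring

theorem contr_prod4_one (hs : s.IsSymm) :
    contr (prod4 s 1) = (1 / 6 : ℝ) • (s.trace • 1 + (7 : ℝ) • s) := by
  ext k l
  have trace_one : ∑ i, (1 : Mat3) i i = 3 := by simp
  have trace_s : ∑ i, s i i = s.trace := rfl
  simp only [contr_apply, prod4, ← Finset.mul_sum, Finset.sum_add_distrib, ← Finset.sum_mul,
    sum_apply_mul_one_apply, sum_one_apply_mul_apply, trace_one, trace_s, hs.apply k l,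
    Matrix.smul_apply, Matrix.add_apply, smul_eq_mul]
  ring

theorem contr_prod22_one (hs : s.IsSymm) :
    contr (prod22 s 1) = (1 / 3 : ℝ) • (s.trace • 1 + s) := by
  ext k l
  have trace_one : ∑ i, (1 : Mat3) i i = 3 := by simp
  have trace_s : ∑ i, s i i = s.trace := rfl
  simp only [contr_apply, prod22, ← Finset.mul_sum, Finset.sum_add_distrib,
    Finset.sum_sub_distrib, ← Finset.sum_mul, sum_apply_mul_one_apply, sum_one_apply_mul_apply,
    trace_one, trace_s, hs.apply k l, Matrix.smul_apply, Matrix.add_apply, smul_eq_mul]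
  ring

end Products

section TraceShift

variable {n K : Type*} [Fintype n] [DecidableEq n] [Field K] {c : K} {r t : Matrix n n K}

theorem trace_smul_one_add_smul_eq_iff (hc : c ≠ 0) (hcn : c + Fintype.card n ≠ 0) :
    t.trace • 1 + c • t = r ↔ t = c⁻¹ • (r - (r.trace / (c + Fintype.card n)) • 1) := by
  constructor
  · rintro rfl
    have trace_eq : (t.trace • 1 + c • t).trace = t.trace * (c + Fintype.card n) := by
      simp only [Matrix.trace_add, Matrix.trace_smul, Matrix.trace_one, smul_eq_mul]
      ring
    rw [trace_eq, mul_div_cancel_right₀ _ hcn, add_sub_cancel_left, inv_smul_smul₀ hc]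
  · rintro rfl
    have trace_eq : (c⁻¹ • (r - (r.trace / (c + Fintype.card n)) • 1)).trace =
        r.trace / (c + Fintype.card n) := by
      simp only [Matrix.trace_sub, Matrix.trace_smul, Matrix.trace_one, smul_eq_mul]
      field_simp
      ring
    rw [trace_eq, smul_inv_smul₀ hc, add_sub_cancel]

theorem existsUnique_isSymm_trace_smul_one_add_smul_eq (hc : c ≠ 0)
    (hcn : c + Fintype.card n ≠ 0) (hr : r.IsSymm) :
    ∃! t : Matrix n n K, t.IsSymm ∧ t.trace • 1 + c • t = r := by
  simp only [trace_smul_one_add_smul_eq_iff hc hcn]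
  exact ⟨_, ⟨(hr.sub (Matrix.isSymm_one.smul _)).smul _, rfl⟩, fun _ ht ↦ ht.2⟩

end TraceShift

theorem existsUnique_isSymm_contr_prod4_one_eq {r : Mat3} (hr : r.IsSymm) :
    ∃! b : Mat3, b.IsSymm ∧ contr (prod4 b 1) = r := by
  refine (existsUnique_congr fun b ↦ and_congr_right fun hb ↦ ?_).mp
    (existsUnique_isSymm_trace_smul_one_add_smul_eq (c := (7 : ℝ)) (by norm_num) (by norm_num)
      (hr.smul (6 : ℝ)))
  rw [contr_prod4_one hb, one_div, inv_smul_eq_iff₀ (by norm_num)]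

theorem existsUnique_isSymm_contr_prod22_one_eq {r : Mat3} (hr : r.IsSymm) :
    ∃! a : Mat3, a.IsSymm ∧ contr (prod22 a 1) = r := by
  refine (existsUnique_congr fun a ↦ and_congr_right fun ha ↦ ?_).mp
    (existsUnique_isSymm_trace_smul_one_add_smul_eq (c := (1 : ℝ)) (by norm_num) (by norm_num)
      (hr.smul (3 : ℝ)))
  rw [contr_prod22_one ha, one_smul, one_div, inv_smul_eq_iff₀ (by norm_num)]

section Vanishing

variable {A : Tens4}

theorem IsEla.apply_self_self_left_eq_zero (hA : IsEla A) (hsym : symPart A = 0)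
    (i j : Fin 3) : A i i i j = 0 := by
  have cyclic : (A i i i j + A i i i j + A i j i i) / 3 = 0 := by
    rw [← symPart_apply, hsym]
    rfl
  linarith [(hA i i i j).2.2]

theorem IsEla.apply_self_self_eq_zero (hA : IsEla A) (hsym : symPart A = 0)
    (hcontr : contr A = 0) (i j k : Fin 3) : A i i j k = 0 := by
  have left := hA.apply_self_self_left_eq_zero hsym
  have right (i j : Fin 3) : A i i j i = 0 := (hA i i j i).2.1.trans (left i j)
  have major (i j : Fin 3) : A i i j j = A j j i i := (hA i i j j).2.2
  have contr_eq (k l : Fin 3) : A 0 0 k l + A 1 1 k l + A 2 2 k l = 0 := by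
    rw [← Fin.sum_univ_three fun i ↦ A i i k l, ← contr_apply, hcontr]
    rfl
  -- Off the diagonal a single term of `contr A j k` survives; on it, the three sums of two of
  -- `A 0 0 1 1`, `A 0 0 2 2`, `A 1 1 2 2` vanish.
  have jk := contr_eq j k
  fin_cases i <;> fin_cases j <;> fin_cases k <;>
    simp only [Fin.zero_eta, Fin.mk_one, Fin.reduceFinMk, left, right] at jk ⊢ <;>
    linarith [contr_eq 0 0, contr_eq 1 1, contr_eq 2 2, left 0 0, left 1 1, left 2 2,
      major 0 1, major 0 2, major 1 2]

theorem IsEla.eq_zero_of_symPart_eq_zero_of_contr_eq_zero (hA : IsEla A) (hsym : symPart A = 0)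
    (hcontr : contr A = 0) : A = 0 := by
  have pair := hA.apply_self_self_eq_zero hsym hcontr
  have straddling (i j l : Fin 3) : A i j i l = 0 := by
    have cyclic : (A i i j l + A i j i l + A i l i j) / 3 = 0 := by
      rw [← symPart_apply, hsym]
      rfl
    linarith [pair i j l, (hA i j i l).2.2]
  ext i j k l
  have pigeonhole : ∀ i j k l : Fin 3, i = j ∨ k = l ∨ i = k ∨ i = l ∨ j = k ∨ j = l := by
    decide
  rcases pigeonhole i j k l with rfl | rfl | rfl | rfl | rfl | rfl
  · exact pair i k l
  · exact (hA i j k k).2.2.trans (pair k i j)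
  · exact straddling i j l
  · exact (hA i j k i).2.1.trans (straddling i j k)
  · exact (hA i j j l).1.trans (straddling j i l)
  · exact (hA i j k j).1.trans ((hA j i k j).2.1.trans (straddling j i k))

end Vanishing

theorem IsEla.isH4_and_eq_prod22_add_prod4_add_iff {C H : Tens4} {a b : Mat3} (hC : IsEla C)
    (ha : a.IsSymm) (hb : b.IsSymm) :
    IsH4 H ∧ C = prod22 a 1 + prod4 b 1 + H ↔
      contr (prod22 a 1) = contr (C - symPart C) ∧ contr (prod4 b 1) = contr (symPart C) ∧
        H = symPart C - prod4 b 1 := by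
  have symm_prod4 := isTotallySymm_prod4 hb Matrix.isSymm_one
  have symPart_a := symPart_prod22 ha Matrix.isSymm_one
  rw [isH4_iff_isTotallySymm_and_contr_eq_zero]
  constructor
  · rintro ⟨⟨symm_H, contr_H⟩, rfl⟩
    have symPart_sum : symPart (prod22 a 1 + prod4 b 1 + H) = prod4 b 1 + H := by
      rw [map_add, map_add, symPart_a, symm_prod4.symPart_eq, symm_H.symPart_eq, zero_add]
    rw [symPart_sum, add_assoc, add_sub_cancel_right, map_add, contr_H, add_zero,
      add_sub_cancel_left]
    exact ⟨rfl, rfl, rfl⟩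
  · rintro ⟨contr_a, contr_b, rfl⟩
    have symm_symPart := hC.isTotallySymm_symPart
    refine ⟨⟨symm_symPart.sub symm_prod4, by rw [map_sub, contr_b, sub_self]⟩, ?_⟩
    have remainder_eq_zero : C - symPart C - prod22 a 1 = 0 :=
      ((hC.sub symm_symPart.isEla).sub
        (isEla_prod22 ha Matrix.isSymm_one)).eq_zero_of_symPart_eq_zero_of_contr_eq_zero
        (by rw [map_sub, map_sub, symm_symPart.symPart_eq, symPart_a, sub_self, sub_zero])
        (by rw [map_sub, contr_a, sub_self])
    rw [← sub_eq_zero.mp remainder_eq_zero]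
    abel

theorem IsEla.existsUnique_eq_prod22_add_prod4_add {C : Tens4} (hC : IsEla C) :
    ∃! q : Mat3 × Mat3 × Tens4, q.1.IsSymm ∧ q.2.1.IsSymm ∧
      IsH4 q.2.2 ∧ C = prod22 q.1 1 + prod4 q.2.1 1 + q.2.2 := by
  have ela_symPart := hC.isTotallySymm_symPart.isEla
  obtain ⟨a, ⟨ha, contr_a⟩, a_unique⟩ :=
    existsUnique_isSymm_contr_prod22_one_eq (hC.sub ela_symPart).isSymm_contr
  obtain ⟨b, ⟨hb, contr_b⟩, b_unique⟩ :=
    existsUnique_isSymm_contr_prod4_one_eq ela_symPart.isSymm_contr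
  refine ⟨(a, b, symPart C - prod4 b 1), ⟨ha, hb,
    (hC.isH4_and_eq_prod22_add_prod4_add_iff ha hb).mpr ⟨contr_a, contr_b, rfl⟩⟩, ?_⟩
  rintro ⟨a', b', H'⟩ ⟨ha', hb', hH'⟩
  obtain ⟨contr_a', contr_b', H'_eq⟩ := (hC.isH4_and_eq_prod22_add_prod4_add_iff ha' hb').mp hH'
  obtain rfl := a_unique a' ⟨ha', contr_a'⟩
  obtain rfl := b_unique b' ⟨hb', contr_b'⟩
  exact congrArg (fun H ↦ (a', b', H)) H'_eq

theorem IsH2.isSymm_smul_one_add {h : Mat3} (hh : IsH2 h) (c : ℝ) : (c • 1 + h).IsSymm :=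
  (Matrix.isSymm_one.smul c).add hh.1

theorem existsUnique_eq_smul_one_add_isH2 {t : Mat3} (ht : t.IsSymm) :
    ∃! p : ℝ × Mat3, IsH2 p.2 ∧ t = p.1 • 1 + p.2 := by
  refine ⟨(t.trace / 3, t - (t.trace / 3) • 1),
    ⟨⟨ht.sub (Matrix.isSymm_one.smul _), ?_⟩, (add_sub_cancel _ _).symm⟩, ?_⟩
  · simp
  · rintro ⟨c, h⟩ ⟨⟨-, trace_h⟩, rfl⟩
    have trace_eq : (c • 1 + h).trace / 3 = c := by
      simp [trace_h]
    rw [trace_eq, add_sub_cancel_left]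

theorem SW_eq_prod22_add_prod4_add (α β : ℝ) (a b : Mat3) (H : Tens4) :
    SW α β a b H = prod22 (α • 1 + a) 1 + prod4 (β • 1 + b) 1 + H := by
  ext i j k l
  simp only [SW, prod22, prod4, Pi.add_apply, Matrix.add_apply, Matrix.smul_apply, smul_eq_mul]
  ring

/-- Existence and uniqueness of the Schur–Weyl harmonic decomposition. -/
theorem sw_decomposition_existsUnique (C : Tens4) (hC : IsEla C) :
    ∃! q : ℝ × ℝ × Mat3 × Mat3 × Tens4,
      IsH2 q.2.2.1 ∧ IsH2 q.2.2.2.1 ∧ IsH4 q.2.2.2.2 ∧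
      ∀ i j k l, C i j k l = SW q.1 q.2.1 q.2.2.1 q.2.2.2.1 q.2.2.2.2 i j k l := by
  obtain ⟨⟨a, b, H⟩, ⟨ha, hb, hH, C_eq⟩, abH_unique⟩ := hC.existsUnique_eq_prod22_add_prod4_add
  obtain ⟨⟨α, a₀⟩, ⟨ha₀, rfl⟩, a_unique⟩ := existsUnique_eq_smul_one_add_isH2 ha
  obtain ⟨⟨β, b₀⟩, ⟨hb₀, rfl⟩, b_unique⟩ := existsUnique_eq_smul_one_add_isH2 hb
  refine ⟨(α, β, a₀, b₀, H), ⟨ha₀, hb₀, hH, fun i j k l ↦ ?_⟩, ?_⟩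
  · rw [SW_eq_prod22_add_prod4_add, C_eq]
  · rintro ⟨α', β', a', b', H'⟩ ⟨ha', hb', hH', C_eq'⟩
    have C_eq_SW : C = SW α' β' a' b' H' := by
      ext i j k l
      exact C_eq' i j k l
    rw [SW_eq_prod22_add_prod4_add] at C_eq_SW
    have abH_eq := abH_unique (α' • 1 + a', β' • 1 + b', H')
      ⟨ha'.isSymm_smul_one_add α', hb'.isSymm_smul_one_add β', hH', C_eq_SW⟩
    obtain ⟨a_eq, b_eq, rfl⟩ : α' • 1 + a' = α • 1 + a₀ ∧ β' • 1 + b' = β • 1 + b₀ ∧ H' = H := by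
      simpa only [Prod.mk.injEq] using abH_eq
    obtain ⟨rfl, rfl⟩ := Prod.mk.inj (a_unique (α', a') ⟨ha', a_eq.symm⟩)
    obtain ⟨rfl, rfl⟩ := Prod.mk.inj (b_unique (β', b') ⟨hb', b_eq.symm⟩)
    rfl
end

section
/- Symmetry of a rank-one deviator: let n ∈ ℝ³ be a unit vector (∑ᵢ nᵢ² = 1) and let h = n nᵀ − (1/3)·1 (where n nᵀ is the matrix with entries nᵢ nⱼ and 1 is the 3×3 identity). Then for every R ∈ SO(3), R h Rᵀ = h if and only if R n = n or R n = −n. -/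
open scoped BigOperators
open Matrix

/-- A rotation matrix: `RᵀR = 1` and `det R = 1`. -/
def IsSO3 (R : Mat3) : Prop := Rᵀ * R = 1 ∧ R.det = 1

/-- The rank-one deviator `n nᵀ - (1/3)·1` associated with a vector `n`. -/
noncomputable def devRank1 (n : Fin 3 → ℝ) : Mat3 :=
  Matrix.vecMulVec n n - (1/3 : ℝ) • 1

/-!
Conjugating `n nᵀ - c • 1` by an orthogonal `R` replaces `n` by `R n` and leaves the scalar part
alone, so the question is when `m mᵀ = n nᵀ`. In that case the squares of the entries of
`(m - n) (m + n)ᵀ` vanish, so over a domain one of the two factors is zero.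
-/

variable {ι ι' κ κ' A : Type*}

theorem mul_vecMulVec_mul_transpose [NonUnitalCommSemiring A] [Fintype κ] [Fintype κ']
    (M : Matrix ι κ A) (N : Matrix ι' κ' A) (v : κ → A) (w : κ' → A) :
    M * vecMulVec v w * Nᵀ = vecMulVec (M *ᵥ v) (N *ᵥ w) := by
  rw [mul_vecMulVec, vecMulVec_mul, vecMul_transpose]

variable [CommRing A]

theorem mul_sub_smul_one_mul_transpose [Fintype κ] [DecidableEq ι] [DecidableEq κ]
    {R : Matrix ι κ A} (hR : R * Rᵀ = 1) (M : Matrix κ κ A) (c : A) :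
    R * (M - c • 1) * Rᵀ = R * M * Rᵀ - c • 1 := by
  rw [Matrix.mul_sub, Matrix.sub_mul, Matrix.mul_smul, Matrix.smul_mul, Matrix.mul_one, hR]

theorem vecMulVec_sub_add_eq_zero [IsReduced A] {m n : ι → A}
    (h : vecMulVec m m = vecMulVec n n) : vecMulVec (m - n) (m + n) = 0 := by
  have mul_eq_mul (i j : ι) : m i * m j = n i * n j := congrFun₂ h i j
  ext i j
  have diag_eq_zero (k : ι) : (m k - n k) * (m k + n k) = 0 := by
    linear_combination mul_eq_mul k k
  have antisymm : (m i - n i) * (m j + n j) = -((m j - n j) * (m i + n i)) := by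
    linear_combination 2 * mul_eq_mul i j
  have sq_eq_zero : ((m i - n i) * (m j + n j)) ^ 2 = 0 := by
    calc ((m i - n i) * (m j + n j)) ^ 2
        = (m i - n i) * (m j + n j) * -((m j - n j) * (m i + n i)) := by rw [sq, ← antisymm]
      _ = -((m i - n i) * (m i + n i)) * ((m j - n j) * (m j + n j)) := by ring
      _ = 0 := by rw [diag_eq_zero j, mul_zero]
  exact (pow_eq_zero_iff two_ne_zero).mp sq_eq_zero

variable [NoZeroDivisors A]

theorem vecMulVec_self_eq_vecMulVec_self_iff {m n : ι → A} :
    vecMulVec m m = vecMulVec n n ↔ m = n ∨ m = -n := by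
  constructor
  · intro h
    simpa only [vecMulVec_eq_zero, sub_eq_zero, add_eq_zero_iff_eq_neg] using
      vecMulVec_sub_add_eq_zero h
  · rintro (rfl | rfl)
    · rfl
    · rw [neg_vecMulVec, vecMulVec_neg, neg_neg]

theorem rank_one_deviator_symmetry_general [Fintype ι] [DecidableEq ι] {R : Matrix ι ι A}
    (hR : R ∈ orthogonalGroup ι A) (n : ι → A) (c : A) :
    R * (vecMulVec n n - c • 1) * Rᵀ = vecMulVec n n - c • 1 ↔ R *ᵥ n = n ∨ R *ᵥ n = -n := by
  have mul_transpose_self : R * Rᵀ = 1 := (mem_orthogonalGroup_iff ι A).mp hR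
  rw [mul_sub_smul_one_mul_transpose mul_transpose_self, sub_left_inj,
    mul_vecMulVec_mul_transpose, vecMulVec_self_eq_vecMulVec_self_iff]

/-- Symmetry of a rank-one deviator: a rotation preserves `n nᵀ - (1/3)·1` iff it
fixes `n` up to sign. -/
theorem rank_one_deviator_symmetry (n : Fin 3 → ℝ) (hn : ∑ i, n i ^ 2 = 1)
    (R : Mat3) (hR : IsSO3 R) :
    R * devRank1 n * Rᵀ = devRank1 n ↔ R.mulVec n = n ∨ R.mulVec n = -n := by
  exact rank_one_deviator_symmetry_general ((mem_orthogonalGroup_iff' _ _).mpr hR.1) n (1 / 3)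
end

section
/- Axis-determination lemma: let k, n ∈ ℝ³ be unit vectors (∑ᵢ kᵢ² = ∑ᵢ nᵢ² = 1). If every R ∈ SO(3) with R k = k satisfies R (n nᵀ − (1/3)·1) Rᵀ = n nᵀ − (1/3)·1, then n = k or n = −k. -/
open scoped BigOperators
open Matrix

/-!
For a unit vector `u`, the quarter turn `Q v = (u ⬝ v) u + u × v` about `u` satisfies
`n ⬝ Q n = (u ⬝ n)²`. If `Q` preserves the deviator of `n`, then `(Q n)(Q n)ᵀ = n nᵀ`, whence
`(n ⬝ Q n)² = (n ⬝ n)²`. Thus `(u ⬝ n)² = n ⬝ n`, the equality case of Cauchy–Schwarz, and `n` is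
a multiple of `u`. (The half turn would not do: it also preserves the deviators of the vectors
orthogonal to `u`.)
-/

section DotProduct

variable {ι A : Type*} [Fintype ι]

theorem transpose_mul_self_eq_one_of_dotProduct_mulVec [DecidableEq ι] [CommSemiring A]
    {M : Matrix ι ι A} (hM : ∀ v w, M *ᵥ v ⬝ᵥ M *ᵥ w = v ⬝ᵥ w) : Mᵀ * M = 1 := by
  refine ext_iff_mulVec.mpr fun v ↦ dotProduct_eq _ _ fun w ↦ ?_
  rw [← mulVec_mulVec, mulVec_transpose, ← dotProduct_mulVec, hM, one_mulVec]

theorem sq_dotProduct_eq_of_vecMulVec_self_eq [CommSemiring A] {v w : ι → A}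
    (h : vecMulVec v v = vecMulVec w w) : (w ⬝ᵥ v) ^ 2 = (w ⬝ᵥ w) ^ 2 := by
  have dotProduct_vecMulVec_self_mulVec (x : ι → A) :
      w ⬝ᵥ vecMulVec x x *ᵥ w = (w ⬝ᵥ x) ^ 2 := by
    rw [vecMulVec_mulVec, op_smul_eq_smul, dotProduct_smul, smul_eq_mul, dotProduct_comm x, sq]
  rw [← dotProduct_vecMulVec_self_mulVec, h, dotProduct_vecMulVec_self_mulVec]

theorem eq_dotProduct_smul_of_sq_dotProduct_eq [CommRing A] [LinearOrder A]
    [IsStrictOrderedRing A] {u v : ι → A} (hu : u ⬝ᵥ u = 1) (huv : (u ⬝ᵥ v) ^ 2 = v ⬝ᵥ v) :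
    v = (u ⬝ᵥ v) • u := by
  refine sub_eq_zero.mp (dotProduct_self_eq_zero.mp ?_)
  simp only [sub_dotProduct, dotProduct_sub, smul_dotProduct, dotProduct_smul, smul_eq_mul, hu,
    dotProduct_comm v u]
  linear_combination -huv

theorem eq_or_eq_neg_of_mem_span_singleton [CommRing A] [NoZeroDivisors A] {u v : ι → A}
    (hu : u ⬝ᵥ u = 1) (hv : v ⬝ᵥ v = 1) (hvu : v ∈ Submodule.span A {u}) : v = u ∨ v = -u := by
  obtain ⟨c, rfl⟩ := Submodule.mem_span_singleton.mp hvu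
  have hc : c ^ 2 = 1 := by
    simpa only [smul_dotProduct, dotProduct_smul, smul_eq_mul, hu, mul_one, ← sq] using hv
  rcases sq_eq_one_iff.mp hc with rfl | rfl
  · exact .inl (one_smul A u)
  · exact .inr (neg_one_smul A u)

theorem exists_ne_zero_smul_dotProduct_smul_eq_one {v : ι → ℝ} (hv : v ≠ 0) :
    ∃ r : ℝ, r ≠ 0 ∧ (r • v) ⬝ᵥ (r • v) = 1 := by
  have hv_pos : 0 < v ⬝ᵥ v := dotProduct_star_self_pos_iff.mpr hv
  have hsqrt_ne : √(v ⬝ᵥ v) ≠ 0 := (Real.sqrt_pos.mpr hv_pos).ne'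
  refine ⟨(√(v ⬝ᵥ v))⁻¹, inv_ne_zero hsqrt_ne, ?_⟩
  rw [smul_dotProduct, dotProduct_smul, smul_eq_mul, smul_eq_mul]
  field_simp
  exact (Real.sq_sqrt hv_pos.le).symm

end DotProduct

section QuarterTurn

variable {A : Type*} [CommRing A]

/-- The matrix `u uᵀ + [u]ₓ` of the map `v ↦ (u ⬝ v) u + u × v`. When `u` is a unit vector, this is
the rotation by a right angle about `u`. -/
def quarterTurn (u : Fin 3 → A) : Matrix (Fin 3) (Fin 3) A :=
  vecMulVec u u + LinearMap.toMatrix' (crossProduct u)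

theorem quarterTurn_mulVec (u v : Fin 3 → A) :
    quarterTurn u *ᵥ v = (u ⬝ᵥ v) • u + u ⨯₃ v := by
  rw [quarterTurn, add_mulVec, vecMulVec_mulVec, op_smul_eq_smul, LinearMap.toMatrix'_mulVec]

theorem quarterTurn_mulVec_self {u : Fin 3 → A} (hu : u ⬝ᵥ u = 1) : quarterTurn u *ᵥ u = u := by
  rw [quarterTurn_mulVec, hu, one_smul, cross_self, add_zero]

theorem dotProduct_quarterTurn_mulVec_self (u v : Fin 3 → A) :
    v ⬝ᵥ quarterTurn u *ᵥ v = (u ⬝ᵥ v) ^ 2 := by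
  rw [quarterTurn_mulVec, dotProduct_add, dotProduct_smul, dot_cross_self, add_zero, smul_eq_mul,
    dotProduct_comm v, sq]

theorem quarterTurn_mulVec_dotProduct {u : Fin 3 → A} (hu : u ⬝ᵥ u = 1) (v w : Fin 3 → A) :
    quarterTurn u *ᵥ v ⬝ᵥ quarterTurn u *ᵥ w = v ⬝ᵥ w := by
  simp only [quarterTurn_mulVec, add_dotProduct, dotProduct_add, smul_dotProduct, dotProduct_smul,
    dotProduct_comm (u ⨯₃ v) u, dot_self_cross, cross_dot_cross, hu, smul_eq_mul,
    dotProduct_comm v u]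
  ring

theorem det_quarterTurn (u : Fin 3 → A) : (quarterTurn u).det = (u ⬝ᵥ u) ^ 2 := by
  simp only [quarterTurn, det_fin_three, vec3_dotProduct, Matrix.add_apply, vecMulVec_apply,
    LinearMap.toMatrix'_apply, cross_apply, cons_val, Pi.single_eq_same, Pi.single_eq_of_ne, ne_eq,
    Fin.reduceEq, not_false_eq_true]
  ring

theorem isSO3_quarterTurn {u : Fin 3 → ℝ} (hu : u ⬝ᵥ u = 1) : IsSO3 (quarterTurn u) :=
  ⟨transpose_mul_self_eq_one_of_dotProduct_mulVec (quarterTurn_mulVec_dotProduct hu),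
    by rw [det_quarterTurn, hu, one_pow]⟩

end QuarterTurn

theorem mul_devRank1_mul_transpose {R : Mat3} (hR : R * Rᵀ = 1) (n : Fin 3 → ℝ) :
    R * devRank1 n * Rᵀ = devRank1 (R *ᵥ n) := by
  rw [devRank1, mul_sub, sub_mul, mul_vecMulVec, vecMulVec_mul, vecMul_transpose, mul_smul_comm,
    mul_one, smul_mul_assoc, hR, devRank1]

theorem mem_span_singleton_of_quarterTurn_mul_devRank1 {u n : Fin 3 → ℝ} (hu : u ⬝ᵥ u = 1)
    (hfix : quarterTurn u * devRank1 n * (quarterTurn u)ᵀ = devRank1 n) :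
    n ∈ Submodule.span ℝ {u} := by
  rw [mul_devRank1_mul_transpose (mul_eq_one_comm.mp (isSO3_quarterTurn hu).1)] at hfix
  have hdot : ((u ⬝ᵥ n) ^ 2) ^ 2 = (n ⬝ᵥ n) ^ 2 := by
    rw [← dotProduct_quarterTurn_mulVec_self]
    exact sq_dotProduct_eq_of_vecMulVec_self_eq (sub_left_injective hfix)
  have huv : (u ⬝ᵥ n) ^ 2 = n ⬝ᵥ n :=
    (pow_left_inj₀ (sq_nonneg _) (dotProduct_star_self_nonneg n) two_ne_zero).mp hdot
  exact Submodule.mem_span_singleton.mpr ⟨_, (eq_dotProduct_smul_of_sq_dotProduct_eq hu huv).symm⟩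

theorem axis_determination_general (k n : Fin 3 → ℝ)
    (hfix : ∀ R : Mat3, IsSO3 R → R *ᵥ k = k → R * devRank1 n * Rᵀ = devRank1 n) :
    n ∈ Submodule.span ℝ {k} := by
  have mem_span_axis {u : Fin 3 → ℝ} (hu : u ⬝ᵥ u = 1) (huk : quarterTurn u *ᵥ k = k) :
      n ∈ Submodule.span ℝ {u} :=
    mem_span_singleton_of_quarterTurn_mul_devRank1 hu (hfix _ (isSO3_quarterTurn hu) huk)
  rcases eq_or_ne k 0 with rfl | hk
  · -- Every rotation fixes `0`, so `n` lies on two distinct coordinate axes.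
    have mem_span_basis (i : Fin 3) : n ∈ Submodule.span ℝ {Pi.single i 1} :=
      mem_span_axis (by simp) (mulVec_zero _)
    obtain ⟨a, rfl⟩ := Submodule.mem_span_singleton.mp (mem_span_basis 0)
    obtain ⟨b, hb⟩ := Submodule.mem_span_singleton.mp (mem_span_basis 1)
    have ha : a = 0 := by simpa using (congrFun hb 0).symm
    simp [ha]
  · obtain ⟨r, hr, hu⟩ := exists_ne_zero_smul_dotProduct_smul_eq_one hk
    have huk : quarterTurn (r • k) *ᵥ k = k := by
      have hfixed := quarterTurn_mulVec_self hu
      rw [mulVec_smul] at hfixed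
      exact smul_right_injective _ hr hfixed
    exact Submodule.span_singleton_smul_le ℝ r k (mem_span_axis hu huk)

/-- Axis-determination lemma: if every rotation fixing `k` preserves the rank-one
deviator of `n`, then `n = ±k`. -/
theorem axis_determination (k n : Fin 3 → ℝ) (hk : ∑ i, k i ^ 2 = 1)
    (hn : ∑ i, n i ^ 2 = 1)
    (hfix : ∀ R : Mat3, IsSO3 R → R.mulVec k = k → R * devRank1 n * Rᵀ = devRank1 n) :
    n = k ∨ n = -k := by
  simp only [sq] at hk hn
  exact eq_or_eq_neg_of_mem_span_singleton hk hn (axis_determination_general k n hfix)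
end

section
/- Clips of cyclic rotation groups (row [Z_m] ⊚ [Z_n] of the clips table): let m, n ≥ 2 and let C_m, C_n ≤ SO(3) be the cyclic groups of rotations about e₃ of orders m and n. For every g ∈ SO(3): if g e₃ = e₃ or g e₃ = −e₃, then C_m ∩ g C_n g⁻¹ = C_{gcd(m,n)}; otherwise C_m ∩ g C_n g⁻¹ is the trivial subgroup. -/
open scoped BigOperators
open Matrix

/-- The rotation about `e₃ = (0,0,1)` with angle `θ`. -/
noncomputable def rotZ (θ : ℝ) : Mat3 :=
  !![Real.cos θ, -Real.sin θ, 0; Real.sin θ, Real.cos θ, 0; 0, 0, 1]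

/-- The cyclic group `C_n` of rotations about `e₃` of order `n`, as a set of
matrices. -/
noncomputable def Cyc (n : ℕ) : Set Mat3 :=
  {R | ∃ k : ℤ, R = rotZ (2 * Real.pi * k / n)}

/-!
Conjugating the rotation about a unit vector `u` by an orthogonal matrix `g` gives a rotation about
`g u` through the same angle up to sign, because `g` carries cross products to cross products up to
the sign `det g`. A rotation about `u` that is also a rotation about `w` fixes `w`, so it is trivial
unless `w = ±u`. This leaves the case where `g` preserves the axis `e₃`: there conjugation by `g`
maps `C_n` onto itself, and an angle is killed by both `m` and `n` exactly when it is killed by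
their gcd.
-/

section OrthogonalGroup

variable {ι R : Type*} [Fintype ι] [DecidableEq ι] [CommRing R]

theorem det_mul_det_of_mem_orthogonalGroup {g : Matrix ι ι R} (hg : g ∈ orthogonalGroup ι R) :
    g.det * g.det = 1 := by
  simpa using congrArg det ((mem_orthogonalGroup_iff ι R).1 hg)

theorem mulVec_dotProduct_mulVec_of_mem_orthogonalGroup {g : Matrix ι ι R}
    (hg : g ∈ orthogonalGroup ι R) (u v : ι → R) : (g *ᵥ u) ⬝ᵥ (g *ᵥ v) = u ⬝ᵥ v := by
  rw [dotProduct_mulVec, ← mulVec_transpose, mulVec_mulVec, (mem_orthogonalGroup_iff' ι R).1 hg,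
    one_mulVec]

theorem transpose_mulVec_cross_mulVec (g : Matrix (Fin 3) (Fin 3) R) (u v : Fin 3 → R) :
    gᵀ *ᵥ ((g *ᵥ u) ⨯₃ (g *ᵥ v)) = g.det • (u ⨯₃ v) := by
  ext i
  fin_cases i <;>
    simp [cross_apply, mulVec, dotProduct, Fin.sum_univ_three, det_fin_three] <;> ring

theorem mulVec_cross_of_mem_orthogonalGroup {g : Matrix (Fin 3) (Fin 3) R}
    (hg : g ∈ orthogonalGroup (Fin 3) R) (u v : Fin 3 → R) :
    g *ᵥ (u ⨯₃ v) = g.det • ((g *ᵥ u) ⨯₃ (g *ᵥ v)) := by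
  have key := congrArg (g.det • g *ᵥ ·) (transpose_mulVec_cross_mulVec g u v)
  simpa [mulVec_smul, smul_smul, (mem_orthogonalGroup_iff (Fin 3) R).1 hg,
    det_mul_det_of_mem_orthogonalGroup hg] using key.symm

end OrthogonalGroup

theorem eq_or_eq_neg_of_dotProduct_sq_eq_one {ι : Type*} [Fintype ι] {u w : ι → ℝ}
    (hu : u ⬝ᵥ u = 1) (hw : w ⬝ᵥ w = 1) (h : (u ⬝ᵥ w) ^ 2 = 1) : w = u ∨ w = -u := by
  have hw_eq : w = (u ⬝ᵥ w) • u := by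
    rw [← sub_eq_zero, ← dotProduct_self_eq_zero]
    simp only [sub_dotProduct, dotProduct_sub, smul_dotProduct, dotProduct_smul, smul_eq_mul,
      dotProduct_comm w u, hu, hw]
    linear_combination -h
  refine (sq_eq_one_iff.1 h).imp (fun h => ?_) fun h => ?_
  all_goals simpa [h] using hw_eq

/-- The rotation by the angle `θ` about the axis spanned by `u`, as the matrix of Rodrigues'
formula. For `u` of norm other than `1` the matrix is in general not orthogonal. -/
noncomputable def axisRotation (u : Fin 3 → ℝ) (θ : ℝ) : Mat3 :=
  Real.cos θ • 1 + (1 - Real.cos θ) • vecMulVec u u +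
    Real.sin θ • LinearMap.toMatrix' (crossProduct u)

section AxisRotation

variable {u w : Fin 3 → ℝ} {θ : ℝ}

theorem axisRotation_mulVec (u v : Fin 3 → ℝ) (θ : ℝ) :
    axisRotation u θ *ᵥ v =
      Real.cos θ • v + ((1 - Real.cos θ) * (u ⬝ᵥ v)) • u + Real.sin θ • (u ⨯₃ v) := by
  simp [axisRotation, add_mulVec, smul_mulVec, vecMulVec_mulVec, smul_smul]

theorem axisRotation_neg (u : Fin 3 → ℝ) (θ : ℝ) :
    axisRotation (-u) θ = axisRotation u (-θ) := by
  simp [axisRotation, neg_vecMulVec, vecMulVec_neg]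

theorem axisRotation_eq_one_of_cos_eq_one (hθ : Real.cos θ = 1) : axisRotation u θ = 1 := by
  have hsin : Real.sin θ = 0 := Real.sin_eq_zero_iff_cos_eq.2 (Or.inl hθ)
  simp [axisRotation, hθ, hsin]

theorem axisRotation_mulVec_self (hu : u ⬝ᵥ u = 1) : axisRotation u θ *ᵥ u = u := by
  rw [axisRotation_mulVec, hu, cross_self]
  module

theorem axisRotation_conj {g : Mat3} (hg : g ∈ orthogonalGroup (Fin 3) ℝ) (u : Fin 3 → ℝ)
    (θ : ℝ) : g * axisRotation u θ * gᵀ = axisRotation (g *ᵥ u) (g.det * θ) := by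
  have hcos_sin : Real.cos (g.det * θ) = Real.cos θ ∧
      Real.sin (g.det * θ) = g.det * Real.sin θ := by
    rcases mul_self_eq_one_iff.1 (det_mul_det_of_mem_orthogonalGroup hg) with h | h <;> simp [h]
  have mulVec_axisRotation (v : Fin 3 → ℝ) :
      g *ᵥ (axisRotation u θ *ᵥ v) = axisRotation (g *ᵥ u) (g.det * θ) *ᵥ (g *ᵥ v) := by
    simp only [axisRotation_mulVec, mulVec_add, mulVec_smul, hcos_sin,
      mulVec_cross_of_mem_orthogonalGroup hg, mulVec_dotProduct_mulVec_of_mem_orthogonalGroup hg,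
      smul_smul, mul_comm (Real.sin θ)]
  refine ext_iff_mulVec.2 fun v => ?_
  rw [← mulVec_mulVec, ← mulVec_mulVec, mulVec_axisRotation, mulVec_mulVec v g,
    (mem_orthogonalGroup_iff (Fin 3) ℝ).1 hg, one_mulVec]

theorem cos_eq_one_or_eq_or_eq_neg_of_axisRotation_mulVec_eq_self (hu : u ⬝ᵥ u = 1)
    (hw : w ⬝ᵥ w = 1) (h : axisRotation u θ *ᵥ w = w) : Real.cos θ = 1 ∨ w = u ∨ w = -u := by
  -- Taking the inner product with `w` kills the cross product in Rodrigues' formula.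
  have hdot : (1 - Real.cos θ) * ((u ⬝ᵥ w) ^ 2 - 1) = 0 := by
    have := congrArg (w ⬝ᵥ ·) h
    simp only [axisRotation_mulVec, dotProduct_add, dotProduct_smul, dot_cross_self, hw,
      dotProduct_comm w u, smul_eq_mul] at this
    linear_combination this
  refine (mul_eq_zero.1 hdot).imp (fun hcos => (sub_eq_zero.1 hcos).symm) fun hsq => ?_
  exact eq_or_eq_neg_of_dotProduct_sq_eq_one hu hw (sub_eq_zero.1 hsq)

theorem axisRotation_eq_one_or_eq_or_eq_neg_of_eq {a b : ℝ} (hu : u ⬝ᵥ u = 1) (hw : w ⬝ᵥ w = 1)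
    (h : axisRotation u a = axisRotation w b) : axisRotation u a = 1 ∨ w = u ∨ w = -u := by
  have hfix : axisRotation u a *ᵥ w = w := by rw [h, axisRotation_mulVec_self hw]
  exact (cos_eq_one_or_eq_or_eq_neg_of_axisRotation_mulVec_eq_self hu hw hfix).imp_left
    axisRotation_eq_one_of_cos_eq_one

end AxisRotation

section RotZ

variable {g : Mat3}

theorem rotZ_eq_axisRotation (θ : ℝ) : rotZ θ = axisRotation ![0, 0, 1] θ := by
  ext i j
  fin_cases i <;> fin_cases j <;>
    simp [rotZ, axisRotation, vecMulVec, LinearMap.toMatrix'_apply, cross_apply]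

theorem rotZ_zero : rotZ 0 = 1 := by
  rw [rotZ_eq_axisRotation, axisRotation_eq_one_of_cos_eq_one Real.cos_zero]

theorem rotZ_eq_rotZ_iff {a b : ℝ} : rotZ a = rotZ b ↔ (a : Real.Angle) = b := by
  refine ⟨fun h => Real.Angle.cos_sin_inj ?_ ?_, fun h => ?_⟩
  · simpa [rotZ] using congrFun₂ h 0 0
  · simpa [rotZ] using congrFun₂ h 1 0
  · simp only [rotZ, ← Real.Angle.cos_coe, ← Real.Angle.sin_coe, h]

theorem rotZ_conj_of_mulVec_eq_or_eq_neg (hg : g ∈ orthogonalGroup (Fin 3) ℝ)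
    (h : g *ᵥ ![0, 0, 1] = ![0, 0, 1] ∨ g *ᵥ ![0, 0, 1] = -![0, 0, 1]) :
    (∀ θ, g * rotZ θ * gᵀ = rotZ θ) ∨ ∀ θ, g * rotZ θ * gᵀ = rotZ (-θ) := by
  simp only [rotZ_eq_axisRotation, axisRotation_conj hg]
  rcases mul_self_eq_one_iff.1 (det_mul_det_of_mem_orthogonalGroup hg) with hdet | hdet <;>
    rcases h with h | h <;> simp only [h, hdet, axisRotation_neg, one_mul, neg_mul,
      neg_neg, implies_true, true_or, or_true]

theorem rotZ_eq_one_of_rotZ_conj_eq {a b : ℝ} (hg : g ∈ orthogonalGroup (Fin 3) ℝ)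
    (h : ¬(g *ᵥ ![0, 0, 1] = ![0, 0, 1] ∨ g *ᵥ ![0, 0, 1] = -![0, 0, 1]))
    (hab : g * rotZ b * gᵀ = rotZ a) : rotZ a = 1 := by
  have he₃ : (![0, 0, 1] : Fin 3 → ℝ) ⬝ᵥ ![0, 0, 1] = 1 := by simp
  have hge₃ := (mulVec_dotProduct_mulVec_of_mem_orthogonalGroup hg _ _).trans he₃
  simp only [rotZ_eq_axisRotation, axisRotation_conj hg] at hab ⊢
  exact (axisRotation_eq_one_or_eq_or_eq_neg_of_eq he₃ hge₃ hab.symm).resolve_right h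

end RotZ

section Cyc

variable {m n : ℕ}

theorem rotZ_mem_Cyc_iff (hn : n ≠ 0) {θ : ℝ} : rotZ θ ∈ Cyc n ↔ n • (θ : Real.Angle) = 0 := by
  have hn' : (n : ℝ) ≠ 0 := Nat.cast_ne_zero.2 hn
  rw [← Real.Angle.natCast_mul_eq_nsmul, ← Real.Angle.coe_zero,
    Real.Angle.angle_eq_iff_two_pi_dvd_sub]
  constructor
  · rintro ⟨k, hk⟩
    obtain ⟨j, hj⟩ := Real.Angle.angle_eq_iff_two_pi_dvd_sub.1 (rotZ_eq_rotZ_iff.1 hk)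
    refine ⟨k + n * j, ?_⟩
    rw [sub_eq_iff_eq_add.1 hj]
    push_cast
    field_simp
    ring
  · rintro ⟨k, hk⟩
    exact ⟨k, by rw [← hk, sub_zero, mul_div_cancel_left₀ θ hn']⟩

theorem one_mem_Cyc (n : ℕ) : 1 ∈ Cyc n :=
  ⟨0, by simp [rotZ_zero]⟩

theorem rotZ_neg_mem_Cyc {θ : ℝ} (h : rotZ θ ∈ Cyc n) : rotZ (-θ) ∈ Cyc n := by
  obtain ⟨k, hk⟩ := h
  refine ⟨-k, rotZ_eq_rotZ_iff.2 ?_⟩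
  rw [Real.Angle.coe_neg, rotZ_eq_rotZ_iff.1 hk, ← Real.Angle.coe_neg]
  push_cast
  ring_nf

theorem Cyc_inter_Cyc (hm : m ≠ 0) (hn : n ≠ 0) : Cyc m ∩ Cyc n = Cyc (m.gcd n) := by
  have mem_iff (θ : ℝ) : rotZ θ ∈ Cyc m ∩ Cyc n ↔ rotZ θ ∈ Cyc (m.gcd n) := by
    rw [Set.mem_inter_iff, rotZ_mem_Cyc_iff hm, rotZ_mem_Cyc_iff hn,
      rotZ_mem_Cyc_iff (Nat.gcd_ne_zero_left hm)]
    simp only [← addOrderOf_dvd_iff_nsmul_eq_zero, Nat.dvd_gcd_iff]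
  ext R
  constructor
  · rintro ⟨⟨k, rfl⟩, hR⟩
    exact (mem_iff _).1 ⟨⟨k, rfl⟩, hR⟩
  · rintro ⟨k, rfl⟩
    exact (mem_iff _).2 ⟨k, rfl⟩

theorem image_conj_Cyc {g : Mat3} (hg : g ∈ orthogonalGroup (Fin 3) ℝ)
    (h : g *ᵥ ![0, 0, 1] = ![0, 0, 1] ∨ g *ᵥ ![0, 0, 1] = -![0, 0, 1]) :
    (fun S => g * S * gᵀ) '' Cyc n = Cyc n := by
  rcases rotZ_conj_of_mulVec_eq_or_eq_neg hg h with hconj | hconj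
  · refine (Set.image_congr ?_).trans (Set.image_id _)
    rintro _ ⟨k, rfl⟩
    exact hconj _
  · refine Set.Subset.antisymm ?_ ?_
    · rintro _ ⟨_, ⟨k, rfl⟩, rfl⟩
      simpa only [hconj] using rotZ_neg_mem_Cyc ⟨k, rfl⟩
    · rintro _ ⟨k, rfl⟩
      exact ⟨_, rotZ_neg_mem_Cyc ⟨k, rfl⟩, by simp only [hconj, neg_neg]⟩

theorem Cyc_inter_image_conj_Cyc_eq_singleton_one {g : Mat3}
    (hg : g ∈ orthogonalGroup (Fin 3) ℝ)
    (h : ¬(g *ᵥ ![0, 0, 1] = ![0, 0, 1] ∨ g *ᵥ ![0, 0, 1] = -![0, 0, 1])) :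
    Cyc m ∩ ((fun S => g * S * gᵀ) '' Cyc n) = {1} := by
  refine Set.eq_singleton_iff_unique_mem.2 ⟨⟨one_mem_Cyc m, 1, one_mem_Cyc n, ?_⟩, ?_⟩
  · simpa using (mem_orthogonalGroup_iff (Fin 3) ℝ).1 hg
  · rintro _ ⟨⟨k, rfl⟩, _, ⟨l, rfl⟩, hkl⟩
    exact rotZ_eq_one_of_rotZ_conj_eq hg h hkl

end Cyc

theorem clips_cyclic_general (m n : ℕ) (hm : m ≠ 0) (hn : n ≠ 0)
    (g : Mat3) (hg : g ∈ orthogonalGroup (Fin 3) ℝ) :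
    ((g.mulVec ![0, 0, 1] = ![0, 0, 1] ∨ g.mulVec ![0, 0, 1] = -![0, 0, 1]) →
      Cyc m ∩ ((fun S => g * S * gᵀ) '' Cyc n) = Cyc (Nat.gcd m n)) ∧
    (¬(g.mulVec ![0, 0, 1] = ![0, 0, 1] ∨ g.mulVec ![0, 0, 1] = -![0, 0, 1]) →
      Cyc m ∩ ((fun S => g * S * gᵀ) '' Cyc n) = {1}) :=
  ⟨fun h => by rw [image_conj_Cyc hg h, Cyc_inter_Cyc hm hn],
    Cyc_inter_image_conj_Cyc_eq_singleton_one hg⟩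

/-- Clips of cyclic rotation groups: for `g ∈ SO(3)`, the intersection
`C_m ∩ g C_n g⁻¹` is `C_gcd(m,n)` if `g` fixes the axis `e₃` up to sign, and is
trivial otherwise. -/
theorem clips_cyclic (m n : ℕ) (hm : 2 ≤ m) (hn : 2 ≤ n)
    (g : Mat3) (hg : IsSO3 g) :
    ((g.mulVec ![0, 0, 1] = ![0, 0, 1] ∨ g.mulVec ![0, 0, 1] = -![0, 0, 1]) →
      Cyc m ∩ ((fun S => g * S * gᵀ) '' Cyc n) = Cyc (Nat.gcd m n)) ∧
    (¬(g.mulVec ![0, 0, 1] = ![0, 0, 1] ∨ g.mulVec ![0, 0, 1] = -![0, 0, 1]) →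
      Cyc m ∩ ((fun S => g * S * gᵀ) '' Cyc n) = {1}) := by
  exact clips_cyclic_general m n (by lia) (by lia) g ((mem_orthogonalGroup_iff' (Fin 3) ℝ).2 hg.1)
end

section
/- Isotropic directional Young's modulus of the IYTI normal form: let a, b, c ∈ ℝ and let S be the fourth-order tensor on ℝ³ determined (together with all components obtained from the minor and major index symmetries) by S₁₁₁₁ = S₂₂₂₂ = S₃₃₃₃ = a, S₁₁₂₂ = b, S₁₁₃₃ = S₂₂₃₃ = c, S₁₃₁₃ = S₂₃₂₃ = (a − c)/2, S₁₂₁₂ = (a − b)/2, all other components zero. Then for every unit vector n ∈ ℝ³ (∑ᵢ nᵢ² = 1), the reciprocal directional Young's modulus ∑_{i,j,k,l} S_ijkl nᵢ nⱼ n_k n_l equals a; in particular it is independent of n. -/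
open scoped BigOperators

/-!
Write `δ` for the identity matrix and `ω = e₁ ∧ e₂` for the generator of rotations about the third
axis. The normal form is
`S_ijkl = c δ_ij δ_kl + (a - c)/2 (δ_ik δ_jl + δ_il δ_jk) + (b - c)/2 (ω_ik ω_jl + ω_il ω_jk)`.
Contracted with `n ⊗ n ⊗ n ⊗ n`, the first two terms give `c |n|⁴ + (a - c) |n|⁴ = a |n|⁴`, and the
last one vanishes because `ω` is skew-symmetric, so that `ω(n, n) = 0`.
-/

open Matrix

section QuarticForm

variable {ι R : Type*} [Fintype ι] [CommSemiring R]

/-- The quartic form `∑ T_ijkl nᵢ nⱼ n_k n_l` of a fourth-order tensor `T`. For a compliance tensor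
and a unit vector `n` it is the reciprocal directional Young's modulus `1 / E(n)`. -/
def quarticForm (T : ι → ι → ι → ι → R) (n : ι → R) : R :=
  ∑ i, ∑ j, ∑ k, ∑ l, T i j k l * n i * n j * n k * n l

/-- The dyadic product `A ⊗ B` of two matrices, with components `A_ij B_kl`. -/
def dyadic (A B : Matrix ι ι R) (i j k l : ι) : R := A i j * B k l

/-- The tensor with components `A_ik A_jl + A_il A_jk`. It is twice the symmetrized product of `A`
with itself that elasticity theory uses; leaving out the factor `1/2` avoids division in `R`. -/
def crossDyadic (A : Matrix ι ι R) (i j k l : ι) : R := A i k * A j l + A i l * A j k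

theorem quarticForm_add (T U : ι → ι → ι → ι → R) (n : ι → R) :
    quarticForm (T + U) n = quarticForm T n + quarticForm U n := by
  simp only [quarticForm, Pi.add_apply, add_mul, Finset.sum_add_distrib]

theorem quarticForm_smul (r : R) (T : ι → ι → ι → ι → R) (n : ι → R) :
    quarticForm (r • T) n = r * quarticForm T n := by
  simp only [quarticForm, Pi.smul_apply, smul_eq_mul, mul_assoc, Finset.mul_sum]

theorem quarticForm_swap_middle (T : ι → ι → ι → ι → R) (n : ι → R) :
    quarticForm (fun i j k l ↦ T i k j l) n = quarticForm T n := by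
  refine Finset.sum_congr rfl fun i _ ↦ ?_
  rw [Finset.sum_comm]
  simp only [mul_right_comm]

theorem quarticForm_swap_right (T : ι → ι → ι → ι → R) (n : ι → R) :
    quarticForm (fun i j k l ↦ T i j l k) n = quarticForm T n := by
  refine Finset.sum_congr rfl fun i _ ↦ Finset.sum_congr rfl fun j _ ↦ ?_
  rw [Finset.sum_comm]
  simp only [mul_right_comm]

theorem quarticForm_dyadic (A B : Matrix ι ι R) (n : ι → R) :
    quarticForm (dyadic A B) n = (n ⬝ᵥ A *ᵥ n) * (n ⬝ᵥ B *ᵥ n) := by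
  rw [mul_comm]
  simp only [quarticForm, dyadic, dotProduct, mulVec, Finset.mul_sum, Finset.sum_mul]
  refine Finset.sum_congr rfl fun i _ ↦ Finset.sum_congr rfl fun j _ ↦
    Finset.sum_congr rfl fun k _ ↦ Finset.sum_congr rfl fun l _ ↦ ?_
  ring

theorem quarticForm_crossDyadic (A : Matrix ι ι R) (n : ι → R) :
    quarticForm (crossDyadic A) n = 2 * (n ⬝ᵥ A *ᵥ n) ^ 2 := by
  have hsplit : crossDyadic A =
      (fun i j k l ↦ dyadic A A i k j l) + fun i j k l ↦ dyadic A A i l j k := rfl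
  have hikjl := quarticForm_swap_middle (dyadic A A) n
  have hiljk : quarticForm (fun i j k l ↦ dyadic A A i l j k) n = quarticForm (dyadic A A) n :=
    (quarticForm_swap_right (fun i j k l ↦ dyadic A A i k j l) n).trans hikjl
  rw [hsplit, quarticForm_add, hikjl, hiljk, quarticForm_dyadic]
  ring

end QuarticForm

theorem dotProduct_mulVec_self_eq_zero_of_transpose_eq_neg {ι R : Type*} [Fintype ι] [CommRing R]
    [IsAddTorsionFree R] {A : Matrix ι ι R} (hA : Aᵀ = -A) (n : ι → R) : n ⬝ᵥ A *ᵥ n = 0 := by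
  refine self_eq_neg.mp ?_
  calc n ⬝ᵥ A *ᵥ n = n ⬝ᵥ Aᵀ *ᵥ n := (dotProduct_transpose_mulVec A n n).symm
    _ = -(n ⬝ᵥ A *ᵥ n) := by rw [hA, neg_mulVec, dotProduct_neg]

namespace IsEla

theorem add {S T : Tens4} (hS : IsEla S) (hT : IsEla T) : IsEla (S + T) := fun i j k l ↦
  ⟨congrArg₂ (· + ·) (hS i j k l).1 (hT i j k l).1,
    congrArg₂ (· + ·) (hS i j k l).2.1 (hT i j k l).2.1,
    congrArg₂ (· + ·) (hS i j k l).2.2 (hT i j k l).2.2⟩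

theorem smul {T : Tens4} (r : ℝ) (hT : IsEla T) : IsEla (r • T) := fun i j k l ↦
  ⟨congrArg (r * ·) (hT i j k l).1, congrArg (r * ·) (hT i j k l).2.1,
    congrArg (r * ·) (hT i j k l).2.2⟩

end IsEla

theorem isEla_dyadic_self {A : Mat3} (hA : A.IsSymm) : IsEla (dyadic A A) := fun i j k l ↦ by
  simp only [dyadic, hA.apply i j, hA.apply k l, mul_comm, and_self]

theorem isEla_crossDyadic {A : Mat3} (hA : Aᵀ = A ∨ Aᵀ = -A) : IsEla (crossDyadic A) := by
  have major (i j k l : Fin 3) : A i k * A j l = A k i * A l j := by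
    rcases hA with hsymm | hskew
    · exact congrArg₂ (fun M N : Mat3 ↦ M i k * N j l) hsymm.symm hsymm.symm
    · rw [← neg_mul_neg]
      exact congrArg₂ (fun M N : Mat3 ↦ M i k * N j l) hskew.symm hskew.symm
  refine fun i j k l ↦ ⟨?_, ?_, ?_⟩
  · simp only [crossDyadic]; ring
  · simp only [crossDyadic]; ring
  · simp only [crossDyadic, major i j k l, major i j l k]; ring

/-- Voigt's enumeration `11, 22, 33, 23, 13, 12` of the unordered index pairs, with 0-based
indices. -/
def voigtPair : Fin 6 → Fin 3 × Fin 3 :=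
  ![(0, 0), (1, 1), (2, 2), (1, 2), (0, 2), (0, 1)]

theorem exists_voigtPair_eq_or_eq_swap (i j : Fin 3) :
    ∃ p, voigtPair p = (i, j) ∨ voigtPair p = (j, i) := by
  revert i j
  decide

/-- The `6 × 6` matrix of a fourth-order tensor in Voigt indices, without the factors `2` and `4`
that compliance matrices conventionally carry on shear components. -/
def voigtMatrix (S : Tens4) : Matrix (Fin 6) (Fin 6) ℝ :=
  of fun p q ↦ S (voigtPair p).1 (voigtPair p).2 (voigtPair q).1 (voigtPair q).2

theorem IsEla.ext_voigtMatrix {S T : Tens4} (hS : IsEla S) (hT : IsEla T)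
    (h : ∀ p q, p ≤ q → voigtMatrix S p q = voigtMatrix T p q) : S = T := by
  have hvoigt (p q : Fin 6) : voigtMatrix S p q = voigtMatrix T p q := by
    rcases le_total p q with hpq | hqp
    · exact h p q hpq
    · exact ((hS _ _ _ _).2.2.trans (h q p hqp)).trans (hT _ _ _ _).2.2
  funext i j k l
  obtain ⟨p, hp⟩ := exists_voigtPair_eq_or_eq_swap i j
  obtain ⟨q, hq⟩ := exists_voigtPair_eq_or_eq_swap k l
  have hpq := hvoigt p q
  rcases hp with hp | hp <;> rcases hq with hq | hq <;>
    simp only [voigtMatrix, of_apply, hp, hq] at hpq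
  · exact hpq
  · rw [(hS i j k l).2.1, (hT i j k l).2.1, hpq]
  · rw [(hS i j k l).1, (hT i j k l).1, hpq]
  · rw [(hS i j k l).1, (hT i j k l).1, (hS j i k l).2.1, (hT j i k l).2.1, hpq]

/-- The skew-symmetric matrix `e₁ ∧ e₂`, the infinitesimal generator of rotations about the third
axis. -/
def axialGenerator : Mat3 := !![0, 1, 0; -1, 0, 0; 0, 0, 0]

theorem transpose_axialGenerator : axialGeneratorᵀ = -axialGenerator := by
  ext i j
  fin_cases i <;> fin_cases j <;> simp [axialGenerator]

/-- The IYTI normal form with parameters `a = S₁₁₁₁`, `b = S₁₁₂₂` and `c = S₁₁₃₃`, written as an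
isotropic tensor plus a multiple of a tensor whose quartic form vanishes. -/
noncomputable def iytiTensor (a b c : ℝ) : Tens4 :=
  c • dyadic 1 1 + ((a - c) / 2) • crossDyadic 1 + ((b - c) / 2) • crossDyadic axialGenerator

theorem isEla_iytiTensor (a b c : ℝ) : IsEla (iytiTensor a b c) :=
  (((isEla_dyadic_self isSymm_one).smul c).add
    ((isEla_crossDyadic (.inl transpose_one)).smul _)).add
    ((isEla_crossDyadic (.inr transpose_axialGenerator)).smul _)

theorem voigtMatrix_iytiTensor (a b c : ℝ) :
    voigtMatrix (iytiTensor a b c) =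
      !![a, b, c, 0, 0, 0;
         b, a, c, 0, 0, 0;
         c, c, a, 0, 0, 0;
         0, 0, 0, (a - c) / 2, 0, 0;
         0, 0, 0, 0, (a - c) / 2, 0;
         0, 0, 0, 0, 0, (a - b) / 2] := by
  ext p q
  fin_cases p <;> fin_cases q <;>
    simp [voigtMatrix, voigtPair, iytiTensor, dyadic, crossDyadic, axialGenerator, one_apply] <;>
    ring

theorem quarticForm_iytiTensor (a b c : ℝ) (n : Fin 3 → ℝ) :
    quarticForm (iytiTensor a b c) n = a * (n ⬝ᵥ n) ^ 2 := by
  have haxial : n ⬝ᵥ axialGenerator *ᵥ n = 0 :=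
    dotProduct_mulVec_self_eq_zero_of_transpose_eq_neg transpose_axialGenerator n
  simp only [iytiTensor, quarticForm_add, quarticForm_smul, quarticForm_dyadic,
    quarticForm_crossDyadic, one_mulVec, haxial]
  ring

/-- Isotropic directional Young's modulus of the IYTI normal form: the reciprocal
directional Young's modulus equals `a` in every direction. Indices are 0-based, so
`0,1,2` stand for the axes `1,2,3`. -/
theorem iyti_isotropic_young (a b c : ℝ) (S : Tens4) (hsym : IsEla S)
    (h1111 : S 0 0 0 0 = a) (h2222 : S 1 1 1 1 = a) (h3333 : S 2 2 2 2 = a)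
    (h1122 : S 0 0 1 1 = b) (h1133 : S 0 0 2 2 = c) (h2233 : S 1 1 2 2 = c)
    (h1313 : S 0 2 0 2 = (a - c) / 2) (h2323 : S 1 2 1 2 = (a - c) / 2)
    (h1212 : S 0 1 0 1 = (a - b) / 2)
    (z1 : S 0 0 1 2 = 0) (z2 : S 0 0 0 2 = 0) (z3 : S 0 0 0 1 = 0)
    (z4 : S 1 1 1 2 = 0) (z5 : S 1 1 0 2 = 0) (z6 : S 1 1 0 1 = 0)
    (z7 : S 2 2 1 2 = 0) (z8 : S 2 2 0 2 = 0) (z9 : S 2 2 0 1 = 0)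
    (z10 : S 1 2 0 2 = 0) (z11 : S 1 2 0 1 = 0) (z12 : S 0 2 0 1 = 0) :
    ∀ n : Fin 3 → ℝ, (∑ i, n i ^ 2 = 1) →
      ∑ i, ∑ j, ∑ k, ∑ l, S i j k l * n i * n j * n k * n l = a := by
  intro n hn
  have hS : S = iytiTensor a b c := by
    refine hsym.ext_voigtMatrix (isEla_iytiTensor a b c) fun p q hpq ↦ ?_
    rw [voigtMatrix_iytiTensor]
    fin_cases p <;> fin_cases q <;> first | assumption | exact absurd hpq (by decide)
  have hnorm : n ⬝ᵥ n = 1 := by simpa only [dotProduct, ← sq] using hn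
  calc quarticForm S n = a * (n ⬝ᵥ n) ^ 2 := by rw [hS, quarticForm_iytiTensor]
    _ = a := by rw [hnorm, one_pow, mul_one]
end
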